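/- arXiv:1104.4534 — 3 statements merged into one kernel-verified Lean document; each statement's English description precedes it below -/
import Mathlib

section
/- Assume H := H₁ = H₂ is continuous and satisfies (A1), and let (u₁, u₂) be the viscosity solution of (C) with Lipschitz continuous initial data (u₀₁, u₀₂). Then |u₁(x,t) − u₂(x,t)| ≤ ‖u₀₁ − u₀₂‖_{L^∞(𝕋^n)} e^{−2t} for all (x,t) ∈ 𝕋^n × [0,∞); in particular, u₁(·,t) − u₂(·,t) → 0 uniformly on 𝕋^n as t → ∞. -/
open MeasureTheory Filter Topology Set

noncomputable section

/-- Euclidean space `ℝ^n`; the torus `𝕋^n` is modelled by `ℤ^n`-periodic functions on it. -/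
abbrev En (n : ℕ) : Type := EuclideanSpace ℝ (Fin n)

/-- The integer vector `k ∈ ℤ^n` viewed as an element of `ℝ^n`. -/
def intVec (n : ℕ) (k : Fin n → ℤ) : En n := WithLp.toLp 2 (fun i => (k i : ℝ))

/-- A `ℤ^n`-periodic function on `ℝ^n`, i.e. a function on the torus `𝕋^n`. -/
def ZPeriodic {n : ℕ} (f : En n → ℝ) : Prop :=
  ∀ (x : En n) (k : Fin n → ℤ), f (x + intVec n k) = f x

/-- A Hamiltonian `H : 𝕋^n × ℝ^n → ℝ` (periodic in the first variable). -/
def ZPeriodicH {n : ℕ} (H : En n → En n → ℝ) : Prop :=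
  ∀ (x : En n) (k : Fin n → ℤ) (p : En n), H (x + intVec n k) p = H x p

/-- A function on `𝕋^n × ℝ` (space-time, periodic in space). -/
def ZPeriodicST {n : ℕ} (u : En n × ℝ → ℝ) : Prop :=
  ∀ (x : En n) (k : Fin n → ℤ) (t : ℝ), u (x + intVec n k, t) = u (x, t)

/-- (A1): coercivity, `lim_{r→∞} inf{H(x,p) : x ∈ 𝕋^n, |p| ≥ r} = ∞`. -/
def Coercive {n : ℕ} (H : En n → En n → ℝ) : Prop :=
  ∀ M : ℝ, ∃ r : ℝ, ∀ (x p : En n), r ≤ ‖p‖ → M ≤ H x p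

/-- Coercivity for an `x`-independent Hamiltonian. -/
def CoerciveP {n : ℕ} (H : En n → ℝ) : Prop :=
  ∀ M : ℝ, ∃ r : ℝ, ∀ p : En n, r ≤ ‖p‖ → M ≤ H p

/-- Lipschitz continuity (membership in `W^{1,∞}`). -/
def IsLip {n : ℕ} (f : En n → ℝ) : Prop := ∃ K : NNReal, LipschitzWith K f

/-- Viscosity subsolution inequality for one stationary equation
`H(x, Dw) + c (w - wo) ≤ ρ(x)` of a weakly coupled system. -/
def StatSubIneq {n : ℕ} (H : En n → En n → ℝ) (c : ℝ) (w wo : En n → ℝ) (ρ : En n → ℝ) : Prop :=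
  ∀ φ : En n → ℝ, ContDiff ℝ 1 φ →
    ∀ x₀ : En n, IsLocalMax (fun x => w x - φ x) x₀ →
      H x₀ (gradient φ x₀) + c * (w x₀ - wo x₀) ≤ ρ x₀

/-- Viscosity supersolution inequality for one stationary equation. -/
def StatSuperIneq {n : ℕ} (H : En n → En n → ℝ) (c : ℝ) (w wo : En n → ℝ) (ρ : En n → ℝ) : Prop :=
  ∀ φ : En n → ℝ, ContDiff ℝ 1 φ →
    ∀ x₀ : En n, IsLocalMin (fun x => w x - φ x) x₀ →
      ρ x₀ ≤ H x₀ (gradient φ x₀) + c * (w x₀ - wo x₀)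

/-- Viscosity subsolution of the stationary system
`Hᵢ(x, Dwᵢ) + cᵢ (wᵢ - wⱼ) = ρᵢ(x)`, `i = 1,2`. -/
def CellSub {n : ℕ} (H₁ H₂ : En n → En n → ℝ) (c₁ c₂ : ℝ) (w₁ w₂ : En n → ℝ)
    (ρ₁ ρ₂ : En n → ℝ) : Prop :=
  StatSubIneq H₁ c₁ w₁ w₂ ρ₁ ∧ StatSubIneq H₂ c₂ w₂ w₁ ρ₂

/-- Viscosity supersolution of the stationary system. -/
def CellSuper {n : ℕ} (H₁ H₂ : En n → En n → ℝ) (c₁ c₂ : ℝ) (w₁ w₂ : En n → ℝ)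
    (ρ₁ ρ₂ : En n → ℝ) : Prop :=
  StatSuperIneq H₁ c₁ w₁ w₂ ρ₁ ∧ StatSuperIneq H₂ c₂ w₂ w₁ ρ₂

/-- Viscosity solution (continuous, sub- and supersolution) of the stationary system. -/
def CellSolution {n : ℕ} (H₁ H₂ : En n → En n → ℝ) (c₁ c₂ : ℝ) (v₁ v₂ : En n → ℝ)
    (ρ₁ ρ₂ : En n → ℝ) : Prop :=
  Continuous v₁ ∧ Continuous v₂ ∧
    CellSub H₁ H₂ c₁ c₂ v₁ v₂ ρ₁ ρ₂ ∧ CellSuper H₁ H₂ c₁ c₂ v₁ v₂ ρ₁ ρ₂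

/-- Subsolution of the ergodic problem (E) with constant `c` (coupling constants 1). -/
def ErgSub {n : ℕ} (H₁ H₂ : En n → En n → ℝ) (v₁ v₂ : En n → ℝ) (c : ℝ) : Prop :=
  CellSub H₁ H₂ 1 1 v₁ v₂ (fun _ => c) (fun _ => c)

/-- Supersolution of the ergodic problem (E). -/
def ErgSuper {n : ℕ} (H₁ H₂ : En n → En n → ℝ) (v₁ v₂ : En n → ℝ) (c : ℝ) : Prop :=
  CellSuper H₁ H₂ 1 1 v₁ v₂ (fun _ => c) (fun _ => c)

/-- Viscosity solution of the ergodic problem (E):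
`H₁(x,Dv₁) + v₁ - v₂ = c`, `H₂(x,Dv₂) + v₂ - v₁ = c` on `𝕋^n`. -/
def ErgSolution {n : ℕ} (H₁ H₂ : En n → En n → ℝ) (v₁ v₂ : En n → ℝ) (c : ℝ) : Prop :=
  CellSolution H₁ H₂ 1 1 v₁ v₂ (fun _ => c) (fun _ => c)

/-- Viscosity subsolution inequality for one evolution equation
`∂ₜ u + H(x, Du) + u - uo ≤ 0` in `𝕋^n × (0,∞)`. -/
def EvolSubIneq {n : ℕ} (H : En n → En n → ℝ) (u uo : En n × ℝ → ℝ) : Prop :=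
  ∀ φ : En n × ℝ → ℝ, ContDiff ℝ 1 φ →
    ∀ (x₀ : En n) (t₀ : ℝ), 0 < t₀ →
      IsLocalMax (fun q => u q - φ q) (x₀, t₀) →
      fderiv ℝ φ (x₀, t₀) (0, 1) + H x₀ (gradient (fun y => φ (y, t₀)) x₀)
        + u (x₀, t₀) - uo (x₀, t₀) ≤ 0

/-- Viscosity supersolution inequality for one evolution equation. -/
def EvolSuperIneq {n : ℕ} (H : En n → En n → ℝ) (u uo : En n × ℝ → ℝ) : Prop :=
  ∀ φ : En n × ℝ → ℝ, ContDiff ℝ 1 φ →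
    ∀ (x₀ : En n) (t₀ : ℝ), 0 < t₀ →
      IsLocalMin (fun q => u q - φ q) (x₀, t₀) →
      0 ≤ fderiv ℝ φ (x₀, t₀) (0, 1) + H x₀ (gradient (fun y => φ (y, t₀)) x₀)
        + u (x₀, t₀) - uo (x₀, t₀)

/-- Viscosity subsolution of system (C) (with coupling constants `c₁ = c₂ = 1`). -/
def SysSub {n : ℕ} (H₁ H₂ : En n → En n → ℝ) (u₁ u₂ : En n × ℝ → ℝ) : Prop :=
  EvolSubIneq H₁ u₁ u₂ ∧ EvolSubIneq H₂ u₂ u₁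

/-- Viscosity supersolution of system (C). -/
def SysSuper {n : ℕ} (H₁ H₂ : En n → En n → ℝ) (u₁ u₂ : En n × ℝ → ℝ) : Prop :=
  EvolSuperIneq H₁ u₁ u₂ ∧ EvolSuperIneq H₂ u₂ u₁

/-- Viscosity solution of the Cauchy problem (C): continuous on `𝕋^n × [0,∞)`,
sub- and supersolution, attaining the initial data. -/
def SysSolution {n : ℕ} (H₁ H₂ : En n → En n → ℝ) (u₀₁ u₀₂ : En n → ℝ)
    (u₁ u₂ : En n × ℝ → ℝ) : Prop :=
  ContinuousOn u₁ {q : En n × ℝ | 0 ≤ q.2} ∧ ContinuousOn u₂ {q : En n × ℝ | 0 ≤ q.2} ∧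
    SysSub H₁ H₂ u₁ u₂ ∧ SysSuper H₁ H₂ u₁ u₂ ∧
    (∀ x, u₁ (x, 0) = u₀₁ x) ∧ (∀ x, u₂ (x, 0) = u₀₂ x)

/-- Viscosity subsolution of the single stationary equation `H(x,Dv) ≤ c` on `𝕋^n`. -/
def SingleSub {n : ℕ} (H : En n → En n → ℝ) (v : En n → ℝ) (c : ℝ) : Prop :=
  ∀ φ : En n → ℝ, ContDiff ℝ 1 φ →
    ∀ x₀ : En n, IsLocalMax (fun x => v x - φ x) x₀ → H x₀ (gradient φ x₀) ≤ c

/-- Viscosity supersolution of the single stationary equation `H(x,Dv) ≥ c` on `𝕋^n`. -/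
def SingleSuper {n : ℕ} (H : En n → En n → ℝ) (v : En n → ℝ) (c : ℝ) : Prop :=
  ∀ φ : En n → ℝ, ContDiff ℝ 1 φ →
    ∀ x₀ : En n, IsLocalMin (fun x => v x - φ x) x₀ → c ≤ H x₀ (gradient φ x₀)

/-- Viscosity solution of the single stationary equation `H(x,Dv) = c` on `𝕋^n`. -/
def SingleSolution {n : ℕ} (H : En n → En n → ℝ) (v : En n → ℝ) (c : ℝ) : Prop :=
  Continuous v ∧ SingleSub H v c ∧ SingleSuper H v c

/-- Uniform convergence `u(·,t) → v` on `𝕋^n` as `t → ∞`. -/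
def UnifTendsTo {n : ℕ} (u : En n × ℝ → ℝ) (v : En n → ℝ) : Prop :=
  ∀ ε : ℝ, 0 < ε → ∃ T : ℝ, ∀ t : ℝ, T ≤ t → ∀ x : En n, |u (x, t) - v x| ≤ ε

/-- (A8)⁺ at level `η` with constant `ψ`. -/
def A8plusAt {n : ℕ} (H : En n → En n → ℝ) (η ψ : ℝ) : Prop :=
  ∀ (x p q : En n), η ≤ H x (p + q) → H x q ≤ 0 →
    ∀ μ : ℝ, 0 < μ → μ ≤ 1 → H x (p + q) + ψ * (1 - μ) ≤ μ * H x (μ⁻¹ • p + q)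

/-- (A8)⁻ at level `η` with constant `ψ`. -/
def A8minusAt {n : ℕ} (H : En n → En n → ℝ) (η ψ : ℝ) : Prop :=
  ∀ (x p q : En n), H x (p + q) ≤ -η → 0 ≤ H x q →
    ∀ μ : ℝ, 1 ≤ μ → μ * H x (μ⁻¹ • p + q) ≤ H x (p + q) - ψ * (μ - 1) / μ

/-- (A8)⁺ with threshold `η₀`. -/
def A8plus {n : ℕ} (H : En n → En n → ℝ) (η₀ : ℝ) : Prop :=
  ∀ η : ℝ, 0 < η → η ≤ η₀ → ∃ ψ : ℝ, 0 < ψ ∧ A8plusAt H η ψ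

/-- (A8)⁻ with threshold `η₀`. -/
def A8minus {n : ℕ} (H : En n → En n → ℝ) (η₀ : ℝ) : Prop :=
  ∀ η : ℝ, 0 < η → η ≤ η₀ → ∃ ψ : ℝ, 0 < ψ ∧ A8minusAt H η ψ

/-- The function `F` of the Key Lemma: `F(r) = C r` for `r ≥ 0`, `F(r) = r / C` for `r < 0`. -/
def Fc (C r : ℝ) : ℝ := if 0 ≤ r then C * r else r / C

/-- `α_η⁺(s)` (resp. `β_η⁺(s)` with `u = u₂`):
`min_{x ∈ 𝕋^n, t ≥ s} (u(x,t) - v(x) + η (t-s)) / (u(x,s) - v(x))`. -/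
def alphaPlus {n : ℕ} (u : En n × ℝ → ℝ) (v : En n → ℝ) (η s : ℝ) : ℝ :=
  sInf {r : ℝ | ∃ (x : En n) (t : ℝ), s ≤ t ∧
    r = (u (x, t) - v x + η * (t - s)) / (u (x, s) - v x)}

/-- `α_η⁻(s)` (resp. `β_η⁻(s)` with `u = u₂`):
`max_{x ∈ 𝕋^n, t ≥ s} (u(x,t) - v(x) - η (t-s)) / (u(x,s) - v(x))`. -/
def alphaMinus {n : ℕ} (u : En n × ℝ → ℝ) (v : En n → ℝ) (η s : ℝ) : ℝ :=
  sSup {r : ℝ | ∃ (x : En n) (t : ℝ), s ≤ t ∧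
    r = (u (x, t) - v x - η * (t - s)) / (u (x, s) - v x)}

/-- (A9)⁺. -/
def A9plus {n : ℕ} (H : En n → En n → ℝ) : Prop :=
  ∃ K : Set (En n), IsClosed K ∧ (∀ x ∈ K, ∀ k : Fin n → ℤ, x + intVec n k ∈ K) ∧
    (∀ x ∈ K, (∀ p : En n, 0 ≤ H x p) ∧ ∃ p : En n, H x p = 0) ∧
    (∀ ε : ℝ, 0 < ε → ∃ η₀ : ℝ, 0 < η₀ ∧ ∃ ψ : ℝ → ℝ, (∀ r : ℝ, 0 < r → 0 < ψ r) ∧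
      ∀ η : ℝ, 0 < η → η ≤ η₀ → ∀ (x p q : En n), ε ≤ Metric.infDist x K →
        η ≤ H x (p + q) → H x q ≤ 0 →
        ∀ μ : ℝ, 0 < μ → μ ≤ 1 → H x (p + q) + ψ η * (1 - μ) ≤ μ * H x (μ⁻¹ • p + q))

/-- (A9)⁻. -/
def A9minus {n : ℕ} (H : En n → En n → ℝ) : Prop :=
  ∃ K : Set (En n), IsClosed K ∧ (∀ x ∈ K, ∀ k : Fin n → ℤ, x + intVec n k ∈ K) ∧
    (∀ x ∈ K, (∀ p : En n, 0 ≤ H x p) ∧ ∃ p : En n, H x p = 0) ∧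
    (∀ ε : ℝ, 0 < ε → ∃ η₀ : ℝ, 0 < η₀ ∧ ∃ ψ : ℝ → ℝ, (∀ r : ℝ, 0 < r → 0 < ψ r) ∧
      ∀ η : ℝ, 0 < η → η ≤ η₀ → ∀ (x p q : En n), ε ≤ Metric.infDist x K →
        H x (p + q) ≤ -η → 0 ≤ H x q →
        ∀ μ : ℝ, 1 ≤ μ → μ * H x (μ⁻¹ • p + q) ≤ H x (p + q) - ψ η * (μ - 1) / μ)

/-- (A6): uniform convexity of an `x`-independent Hamiltonian. -/
def UnifConvex {n : ℕ} (H : En n → ℝ) : Prop :=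
  ∃ α : ℝ, 0 < α ∧ ∀ᵐ q : En n ∂volume, DifferentiableAt ℝ H q ∧
    ∀ p : En n, H q + fderiv ℝ H q (p - q) + α * ‖p - q‖ ^ 2 ≤ H p

end

theorem sh_cube {n : ℕ} (x : En n) : ∃ k : Fin n → ℤ, ‖x + intVec n k‖ ≤ (n : ℝ) := by
  refine ⟨fun i => -⌊x i⌋, ?_⟩
  have h1 : ∀ i, |(x + intVec n (fun i => -⌊x i⌋)) i| ≤ 1 := by
    intro i
    have h : (x + intVec n (fun i => -⌊x i⌋)) i = Int.fract (x i) := by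
      simp [intVec, Int.fract, sub_eq_add_neg]
    rw [h, abs_of_nonneg (Int.fract_nonneg _)]
    exact (Int.fract_lt_one _).le
  generalize x + intVec n (fun i => -⌊x i⌋) = z at h1
  rw [EuclideanSpace.norm_eq]
  apply Real.sqrt_le_iff.2
  refine ⟨by positivity, ?_⟩
  calc ∑ i, ‖z i‖ ^ 2 ≤ ∑ i : Fin n, (1 : ℝ) := by
        apply Finset.sum_le_sum
        intro i _
        rw [Real.norm_eq_abs]
        have := h1 i
        have := abs_nonneg (z i)
        nlinarith
    _ = n := by simp
    _ ≤ (n : ℝ) ^ 2 := by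
        exact_mod_cast Nat.le_self_pow (by norm_num) n

theorem sh_uc {n : ℕ} {Y : Type*} [MetricSpace Y] (f : En n × Y → ℝ) (K : Set Y)
    (hK : IsCompact K) (hf : ContinuousOn f (univ ×ˢ K))
    (hper : ∀ x k y, f (x + intVec n k, y) = f (x, y)) (e : ℝ) (he : 0 < e) :
    ∃ r > 0, ∀ x y, ∀ s ∈ K, ∀ t ∈ K, dist x y < r → dist s t < r →
      |f (x, s) - f (y, t)| < e := by
  have hc : IsCompact (Metric.closedBall (0 : En n) (n + 1) ×ˢ K) :=
    (isCompact_closedBall _ _).prod hK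
  have hu := hc.uniformContinuousOn_of_continuous (hf.mono (prod_mono (subset_univ _) subset_rfl))
  rw [Metric.uniformContinuousOn_iff] at hu
  obtain ⟨r, hr, h⟩ := hu e he
  refine ⟨min r 1, by positivity, ?_⟩
  intro x y s hs t ht hxy hst
  obtain ⟨k, hk⟩ := sh_cube x
  have hd : dist (x + intVec n k) (y + intVec n k) = dist x y := dist_add_right _ _ _
  have hxr := lt_min_iff.1 hxy
  have hy : ‖y + intVec n k‖ ≤ n + 1 := by
    have := norm_sub_norm_le (y + intVec n k) (x + intVec n k)
    rw [← dist_eq_norm, dist_comm, hd] at this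
    linarith
  have := h (x + intVec n k, s) ⟨by simp; linarith, hs⟩ (y + intVec n k, t) ⟨by simpa using hy, ht⟩
    (by
      rw [Prod.dist_eq]
      exact max_lt (by simpa [hd] using hxr.1) (lt_min_iff.1 hst).1)
  rw [Real.dist_eq, hper, hper] at this
  exact this

theorem sh_bdd {n : ℕ} {Y : Type*} [MetricSpace Y] (f : En n × Y → ℝ) (K : Set Y)
    (hK : IsCompact K) (hf : ContinuousOn f (univ ×ˢ K))
    (hper : ∀ x k y, f (x + intVec n k, y) = f (x, y)) :
    ∃ C, ∀ x, ∀ s ∈ K, |f (x, s)| ≤ C := by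
  have hc : IsCompact (Metric.closedBall (0 : En n) n ×ˢ K) :=
    (isCompact_closedBall _ _).prod hK
  obtain ⟨C, hC⟩ := hc.exists_bound_of_continuousOn (hf.mono (prod_mono (subset_univ _) subset_rfl))
  refine ⟨C, fun x s hs => ?_⟩
  obtain ⟨k, hk⟩ := sh_cube x
  have := hC (x + intVec n k, s) ⟨by simpa using hk, hs⟩
  rwa [hper] at this

theorem sh_grad {n : ℕ} (A c : ℝ) (z x : En n) :
    gradient (fun y : En n => A * ‖y - z‖ ^ 2 + c) x = (2 * A) • (x - z) := by
  apply HasGradientAt.gradient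
  rw [hasGradientAt_iff_hasFDerivAt]
  have h := ((((hasFDerivAt_id x).sub_const z).norm_sq).const_mul A).add_const c
  refine h.congr_fderiv ?_
  ext v
  simp
  ring

theorem sh_dt {n : ℕ} (A B : ℝ) (z x : En n) (s t : ℝ) (ψ : ℝ → ℝ) (hψ : ContDiff ℝ 1 ψ) :
    fderiv ℝ (fun q : En n × ℝ => A * ‖q.1 - z‖ ^ 2 + (B * (q.2 - s) ^ 2 + ψ q.2)) (x, t) (0, 1)
      = 2 * B * (t - s) + deriv ψ t := by
  have h1 : HasFDerivAt (fun q : En n × ℝ => q.1) (ContinuousLinearMap.fst ℝ (En n) ℝ) (x, t) :=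
    hasFDerivAt_fst
  have h2 : HasFDerivAt (fun q : En n × ℝ => q.2) (ContinuousLinearMap.snd ℝ (En n) ℝ) (x, t) :=
    hasFDerivAt_snd
  have hd : HasDerivAt ψ (deriv ψ t) t := ((hψ.differentiable (by norm_num)) t).hasDerivAt
  have h3 : HasFDerivAt (fun q : En n × ℝ => ψ q.2)
      (deriv ψ t • ContinuousLinearMap.snd ℝ (En n) ℝ) (x, t) :=
    HasDerivAt.comp_hasFDerivAt (x, t) (h₂ := ψ) hd h2
  have h := (((h1.sub_const z).norm_sq).const_mul A).add
    ((((h2.sub_const s).pow 2).const_mul B).add h3)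
  have h' : HasFDerivAt
    (fun q : En n × ℝ => A * ‖q.1 - z‖ ^ 2 + (B * (q.2 - s) ^ 2 + ψ q.2)) _ (x, t) := h
  rw [h'.fderiv]
  simp
  ring

theorem sh_cd {n : ℕ} (A B : ℝ) (z : En n) (s : ℝ) (ψ : ℝ → ℝ) (hψ : ContDiff ℝ 1 ψ) :
    ContDiff ℝ 1 (fun q : En n × ℝ => A * ‖q.1 - z‖ ^ 2 + (B * (q.2 - s) ^ 2 + ψ q.2)) := by
  have h1 : ContDiff ℝ 1 (fun q : En n × ℝ => ‖q.1 - z‖ ^ 2) :=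
    (contDiff_fst.sub contDiff_const).norm_sq ℝ
  have h3 : ContDiff ℝ 1 (fun q : En n × ℝ => ψ q.2) := hψ.comp contDiff_snd
  fun_prop

/-- Existence of a maximum of the doubled function. -/
theorem sh_max {n : ℕ} (u₁ u₂ : En n × ℝ → ℝ) (hu₁per : ZPeriodicST u₁) (hu₂per : ZPeriodicST u₂)
    (T : ℝ) (h1 : ContinuousOn u₁ (univ ×ˢ Icc 0 T)) (h2 : ContinuousOn u₂ (univ ×ˢ Icc 0 T))
    (ψ : ℝ → ℝ) (hψ : Continuous ψ) (C : ℝ)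
    (hC : ∀ x y, ∀ t ∈ Icc 0 T, ∀ s ∈ Icc 0 T, u₁ (x, t) - u₂ (y, s) - ψ t ≤ C)
    (x0 : En n) (t0 : ℝ) (ht0 : t0 ∈ Icc 0 T) (h0 : 0 ≤ u₁ (x0, t0) - u₂ (x0, t0) - ψ t0)
    (A B : ℝ) (hA : 0 < A) (hB : 0 < B) :
    ∃ x y, ∃ t ∈ Icc 0 T, ∃ s ∈ Icc 0 T,
      0 ≤ u₁ (x, t) - u₂ (y, s) - ψ t - A * ‖x - y‖ ^ 2 - B * (t - s) ^ 2 ∧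
      ∀ x' y', ∀ t' ∈ Icc 0 T, ∀ s' ∈ Icc 0 T,
        u₁ (x', t') - u₂ (y', s') - ψ t' - A * ‖x' - y'‖ ^ 2 - B * (t' - s') ^ 2 ≤
        u₁ (x, t) - u₂ (y, s) - ψ t - A * ‖x - y‖ ^ 2 - B * (t - s) ^ 2 := by
  set Φ : (En n × En n) × (ℝ × ℝ) → ℝ := fun q =>
    u₁ (q.1.1, q.2.1) - u₂ (q.1.2, q.2.2) - ψ q.2.1 - A * ‖q.1.1 - q.1.2‖ ^ 2
      - B * (q.2.1 - q.2.2) ^ 2 with hΦ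
  set L : ℝ := C / A + 1 with hL
  have hC0 : 0 ≤ C := h0.trans (hC _ _ _ ht0 _ ht0)
  have hL1 : 1 ≤ L := by have : 0 ≤ C / A := by positivity
                         linarith
  set S : Set ((En n × En n) × (ℝ × ℝ)) :=
    (Metric.closedBall 0 n ×ˢ Metric.closedBall 0 (n + L)) ×ˢ (Icc 0 T ×ˢ Icc 0 T) with hS
  have hScomp : IsCompact S :=
    ((isCompact_closedBall _ _).prod (isCompact_closedBall _ _)).prod (isCompact_Icc.prod isCompact_Icc)
  have hcont : ContinuousOn Φ S := by
    have c1 : ContinuousOn (fun q : (En n × En n) × (ℝ × ℝ) => u₁ (q.1.1, q.2.1)) S := by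
      apply h1.comp (by fun_prop)
      intro q hq
      exact ⟨mem_univ _, hq.2.1⟩
    have c2 : ContinuousOn (fun q : (En n × En n) × (ℝ × ℝ) => u₂ (q.1.2, q.2.2)) S := by
      apply h2.comp (by fun_prop)
      intro q hq
      exact ⟨mem_univ _, hq.2.2⟩
    have c3 : ContinuousOn (fun q : (En n × En n) × (ℝ × ℝ) =>
      - ψ q.2.1 - A * ‖q.1.1 - q.1.2‖ ^ 2 - B * (q.2.1 - q.2.2) ^ 2) S := by
      apply Continuous.continuousOn
      fun_prop
    refine ((c1.sub c2).add c3).congr ?_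
    intro q _
    simp only [hΦ, Pi.add_apply, Pi.sub_apply]
    ring
  have key : ∀ x y, ∀ t ∈ Icc 0 T, ∀ s ∈ Icc 0 T, 0 ≤ Φ ((x, y), (t, s)) →
      ∃ q ∈ S, Φ q = Φ ((x, y), (t, s)) := by
    intro x y t ht s hs hpos
    obtain ⟨k, hk⟩ := sh_cube x
    have hxy : (x + intVec n k) - (y + intVec n k) = x - y := by abel
    refine ⟨((x + intVec n k, y + intVec n k), (t, s)), ⟨⟨by simpa using hk, ?_⟩, ht, hs⟩, ?_⟩
    · have hb : A * ‖x - y‖ ^ 2 ≤ C := by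
        have := hC x y t ht s hs
        have h4 : 0 ≤ B * (t - s) ^ 2 := by positivity
        simp only [hΦ] at hpos
        linarith
      have hn : ‖x - y‖ ≤ L := by
        by_contra hcon
        push Not at hcon
        have e1 : A * L = C + A := by rw [hL]; field_simp
        have e2 : L ≤ ‖x - y‖ ^ 2 := by nlinarith
        have e3 := mul_le_mul_of_nonneg_left e2 hA.le
        linarith
      have := norm_sub_norm_le (y + intVec n k) (x + intVec n k)
      rw [norm_sub_rev, hxy] at this
      simp
      linarith
    · simp only [hΦ, hxy]
      rw [hu₁per, hu₂per]
  have hp0 : 0 ≤ Φ ((x0, x0), (t0, t0)) := by simpa [hΦ] using h0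
  obtain ⟨q0, hq0, hq0'⟩ := key x0 x0 t0 ht0 t0 ht0 hp0
  obtain ⟨q, hq, hmax⟩ := hScomp.exists_isMaxOn ⟨q0, hq0⟩ hcont
  have hqpos : 0 ≤ Φ q := by
    have := hmax hq0
    simp only [mem_ofPred_eq] at this
    linarith
  refine ⟨q.1.1, q.1.2, q.2.1, hq.2.1, q.2.2, hq.2.2, hqpos, ?_⟩
  intro x' y' t' ht' s' hs'
  change Φ ((x', y'), (t', s')) ≤ Φ q
  by_cases hpos : 0 ≤ Φ ((x', y'), (t', s'))
  · obtain ⟨q1, hq1, hq1'⟩ := key x' y' t' ht' s' hs' hpos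
    rw [← hq1']
    exact hmax hq1
  · linarith

theorem sh_key {n : ℕ} (H : En n → En n → ℝ)
    (hHcont : Continuous fun q : En n × En n => H q.1 q.2)
    (hHper : ZPeriodicH H) (hHcoer : Coercive H)
    (u₁ u₂ : En n × ℝ → ℝ) (hu₁per : ZPeriodicST u₁) (hu₂per : ZPeriodicST u₂)
    (T : ℝ) (h1 : ContinuousOn u₁ (univ ×ˢ Icc 0 T)) (h2 : ContinuousOn u₂ (univ ×ˢ Icc 0 T))
    (hsub : EvolSubIneq H u₁ u₂) (hsup : EvolSuperIneq H u₂ u₁)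
    (ψ : ℝ → ℝ) (hψ : ContDiff ℝ 1 ψ) (e : ℝ) (he : 0 < e)
    (hini : ∀ x, u₁ (x, 0) - u₂ (x, 0) ≤ ψ 0 - 3 * e)
    (hend : ∀ x, u₁ (x, T) - u₂ (x, T) ≤ ψ T - 3 * e)
    (hd : ∀ t ∈ Icc 0 T, 4 * e ≤ deriv ψ t + 2 * ψ t) :
    ∀ x, ∀ t ∈ Icc 0 T, u₁ (x, t) - u₂ (x, t) ≤ ψ t := by
  by_contra hcon
  push Not at hcon
  obtain ⟨x0, t0, ht0, h0⟩ := hcon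
  obtain ⟨C1, hC1⟩ := sh_bdd u₁ (Icc 0 T) isCompact_Icc h1 hu₁per
  obtain ⟨C2, hC2⟩ := sh_bdd u₂ (Icc 0 T) isCompact_Icc h2 hu₂per
  obtain ⟨C3, hC3⟩ := isCompact_Icc.exists_bound_of_continuousOn
    (hψ.continuous.continuousOn (s := Icc 0 T))
  obtain ⟨C4, hC4⟩ := isCompact_Icc.exists_bound_of_continuousOn
    ((hψ.continuous_deriv (by norm_num)).continuousOn (s := Icc 0 T))
  simp only [Real.norm_eq_abs] at hC3 hC4
  obtain ⟨r1, hr1, hr1'⟩ := sh_uc u₁ (Icc 0 T) isCompact_Icc h1 hu₁per e he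
  obtain ⟨r2, hr2, hr2'⟩ := sh_uc u₂ (Icc 0 T) isCompact_Icc h2 hu₂per e he
  have huψ := isCompact_Icc.uniformContinuousOn_of_continuous
    (hψ.continuous.continuousOn (s := Icc 0 T))
  rw [Metric.uniformContinuousOn_iff] at huψ
  obtain ⟨r3, hr3, hr3'⟩ := huψ e he
  set C : ℝ := C1 + C2 + C3 with hCdef
  have hC : ∀ x y, ∀ t ∈ Icc 0 T, ∀ s ∈ Icc 0 T, u₁ (x, t) - u₂ (y, s) - ψ t ≤ C := by
    intro x y t ht s hs
    have a1 := abs_le.1 (hC1 x t ht)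
    have a2 := abs_le.1 (hC2 y s hs)
    have a3 := abs_le.1 (hC3 t ht)
    linarith [a1.2, a2.1, a3.1]
  have hCpos : 0 < C := lt_of_lt_of_le (by linarith) (hC x0 x0 t0 ht0 t0 ht0)
  set r : ℝ := min r1 (min r2 r3) with hr
  have hrpos : 0 < r := by positivity
  set B : ℝ := (C + 1) / r ^ 2 with hB
  have hBpos : 0 < B := by positivity
  have hBr : B * r ^ 2 = C + 1 := by rw [hB]; field_simp
  obtain ⟨R, hR⟩ := hHcoer (2 * B * r + C4 + C1 + C2 + 1)
  obtain ⟨r4, hr4, hr4'⟩ := sh_uc (fun q : En n × En n => H q.1 q.2) (Metric.closedBall 0 R)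
    (isCompact_closedBall _ _) hHcont.continuousOn (fun x k y => hHper x k y) e he
  set ρ : ℝ := min r r4 with hρ
  have hρpos : 0 < ρ := by positivity
  set A : ℝ := (C + 1) / ρ ^ 2 with hA
  have hApos : 0 < A := by positivity
  have hAρ : A * ρ ^ 2 = C + 1 := by rw [hA]; field_simp
  obtain ⟨x, y, t, ht, s, hs, hpos, hmax⟩ := sh_max u₁ u₂ hu₁per hu₂per T h1 h2 ψ hψ.continuous C hC
    x0 t0 ht0 (by linarith) A B hApos hBpos
  have hCm := hC x y t ht s hs
  have hA0 : 0 ≤ A * ‖x - y‖ ^ 2 := by positivity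
  have hB0 : 0 ≤ B * (t - s) ^ 2 := by positivity
  have hxy : ‖x - y‖ < ρ := by
    by_contra hc
    push Not at hc
    have : ρ ^ 2 ≤ ‖x - y‖ ^ 2 := pow_le_pow_left₀ hρpos.le hc 2
    nlinarith
  have hts : |t - s| < r := by
    by_contra hc
    push Not at hc
    have : r ^ 2 ≤ |t - s| ^ 2 := pow_le_pow_left₀ hrpos.le hc 2
    rw [sq_abs] at this
    nlinarith
  have hxyr : ‖x - y‖ < r := hxy.trans_le (min_le_left _ _)
  have hrr1 : r ≤ r1 := min_le_left _ _
  have hrr2 : r ≤ r2 := (min_le_right _ _).trans (min_le_left _ _)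
  have hrr3 : r ≤ r3 := (min_le_right _ _).trans (min_le_right _ _)
  have d1 : |u₁ (x, t) - u₁ (y, s)| < e := hr1' x y t ht s hs
    (by rw [dist_eq_norm]; linarith) (by rw [Real.dist_eq]; linarith)
  have d2 : |u₂ (x, t) - u₂ (y, s)| < e := hr2' x y t ht s hs
    (by rw [dist_eq_norm]; linarith) (by rw [Real.dist_eq]; linarith)
  have d3 : |ψ t - ψ s| < e := hr3' t ht s hs (by rw [Real.dist_eq]; linarith)
  rw [abs_lt] at d1 d2 d3
  have w1 : ψ t - e < u₁ (x, t) - u₂ (x, t) := by linarith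
  have w2 : ψ t - e < u₁ (y, s) - u₂ (y, s) := by linarith
  have ht1 : 0 < t := by
    rcases ht.1.lt_or_eq with h | h
    · exact h
    · subst h; linarith [hini x]
  have ht2 : t < T := by
    rcases ht.2.lt_or_eq with h | h
    · exact h
    · subst h; linarith [hend x]
  have hs1 : 0 < s := by
    rcases hs.1.lt_or_eq with h | h
    · exact h
    · subst h; linarith [hini y]
  have hs2 : s < T := by
    rcases hs.2.lt_or_eq with h | h
    · exact h
    · subst h; linarith [hend y]
  have nb : ∀ (z : En n) (τ : ℝ), 0 < τ → τ < T → ∀ᶠ q : En n × ℝ in 𝓝 (z, τ), q.2 ∈ Icc 0 T := by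
    intro z τ a b
    exact continuous_snd.continuousAt.eventually (Icc_mem_nhds a b)
  have I1 := hsub _ (sh_cd A B y s ψ hψ) x t ht1 (by
    filter_upwards [nb x t ht1 ht2] with q hq
    have := hmax q.1 y q.2 hq s hs
    simp only [Prod.mk.eta] at this ⊢
    linarith)
  have I2 := hsup _ (sh_cd (-A) (-B) x t (fun _ => 0) contDiff_const) y s hs1 (by
    filter_upwards [nb y s hs1 hs2] with q hq
    have := hmax x q.1 t ht q.2 hq
    rw [norm_sub_rev x q.1, norm_sub_rev x y] at this
    simp only [Prod.mk.eta] at this ⊢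
    linarith [sq (t - s), sq (s - t), sq (t - q.2), sq (q.2 - t)])
  rw [sh_dt _ _ _ _ _ _ _ hψ] at I1
  rw [sh_dt _ _ _ _ _ _ _ contDiff_const] at I2
  simp only [sh_grad] at I1 I2
  have hp : (2 * -A) • (y - x) = (2 * A) • (x - y) := by
    rw [← neg_sub x y, smul_neg, ← neg_smul]; ring_nf
  rw [hp] at I2
  simp only [deriv_const] at I2
  set p := (2 * A) • (x - y) with hpdef
  have hpR : ‖p‖ ≤ R := by
    by_contra hc
    push Not at hc
    have := hR x p hc.le
    have a1 := abs_le.1 (hC1 x t ht)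
    have a2 := abs_le.1 (hC2 x t ht)
    have a4 := abs_le.1 (hC4 t ht)
    have a5 := abs_lt.1 hts
    have : B * -r ≤ B * (t - s) := by
      apply mul_le_mul_of_nonneg_left a5.1.le hBpos.le
    linarith [a1.1, a2.2, a4.1]
  have hH := hr4' x y p (by simpa using hpR) p (by simpa using hpR)
    (by rw [dist_eq_norm]; exact hxy.trans_le (min_le_right _ _)) (by simpa using hr4)
  simp only [abs_lt] at hH
  have := hd t ht
  linarith [hH.1]

theorem sh_half {n : ℕ} (H : En n → En n → ℝ)
    (hHcont : Continuous fun q : En n × En n => H q.1 q.2)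
    (hHper : ZPeriodicH H) (hHcoer : Coercive H)
    (u₁ u₂ : En n × ℝ → ℝ) (hu₁per : ZPeriodicST u₁) (hu₂per : ZPeriodicST u₂)
    (h1 : ContinuousOn u₁ {q : En n × ℝ | 0 ≤ q.2}) (h2 : ContinuousOn u₂ {q : En n × ℝ | 0 ≤ q.2})
    (hsub : EvolSubIneq H u₁ u₂) (hsup : EvolSuperIneq H u₂ u₁) (M : ℝ) (hM0 : 0 ≤ M)
    (hM : ∀ x, u₁ (x, 0) - u₂ (x, 0) ≤ M) (x : En n) (T : ℝ) (hT : 0 ≤ T) :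
    u₁ (x, T) - u₂ (x, T) ≤ M * Real.exp (-2 * T) := by
  apply le_of_forall_pos_le_add
  intro η hη
  have hss : (univ : Set (En n)) ×ˢ Icc 0 (T + 1) ⊆ {q : En n × ℝ | 0 ≤ q.2} :=
    fun q hq => hq.2.1
  obtain ⟨C1, hC1⟩ := sh_bdd u₁ (Icc 0 (T + 1)) isCompact_Icc (h1.mono hss) hu₁per
  obtain ⟨C2, hC2⟩ := sh_bdd u₂ (Icc 0 (T + 1)) isCompact_Icc (h2.mono hss) hu₂per
  have hTm : T + 1 ∈ Icc 0 (T + 1) := ⟨by linarith, le_rfl⟩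
  have hC10 : 0 ≤ C1 := (abs_nonneg _).trans (hC1 0 _ hTm)
  have hC20 : 0 ≤ C2 := (abs_nonneg _).trans (hC2 0 _ hTm)
  set K : ℝ := (C1 + C2 + 1) / η with hK
  have hK0 : 0 < K := by positivity
  have hKη : η * K = C1 + C2 + 1 := by rw [hK]; field_simp
  set ψ : ℝ → ℝ := fun t => M * Real.exp (-2 * t) + η * Real.exp (K * (t - T)) with hψ
  have hcd : ContDiff ℝ 1 ψ := by
    rw [hψ]; fun_prop
  have hder : ∀ t, deriv ψ t = M * (Real.exp (-2 * t) * -2) + η * (Real.exp (K * (t - T)) * K) := by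
    intro t
    apply HasDerivAt.deriv
    have a1 : HasDerivAt (fun t : ℝ => -2 * t) (-2) t := by
      simpa using (hasDerivAt_id t).const_mul (-2 : ℝ)
    have a2 : HasDerivAt (fun t : ℝ => K * (t - T)) K t := by
      simpa using ((hasDerivAt_id t).sub_const T).const_mul K
    exact (a1.exp.const_mul M).add (a2.exp.const_mul η)
  set e : ℝ := min (1 / 3) (η * Real.exp (-(K * T)) / 3) with he
  have hepos : 0 < e := by positivity
  have he1 : e ≤ 1 / 3 := min_le_left _ _
  have he2 : e ≤ η * Real.exp (-(K * T)) / 3 := min_le_right _ _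
  have := sh_key H hHcont hHper hHcoer u₁ u₂ hu₁per hu₂per (T + 1) (h1.mono hss) (h2.mono hss)
    hsub hsup ψ hcd e hepos
    (by
      intro z
      have := hM z
      simp only [hψ]
      have e1 : K * (0 - T) = -(K * T) := by ring
      rw [e1]
      simp
      linarith)
    (by
      intro z
      have a1 := abs_le.1 (hC1 z _ hTm)
      have a2 := abs_le.1 (hC2 z _ hTm)
      simp only [hψ]
      have e1 : K * (T + 1 - T) = K := by ring
      rw [e1]
      have e2 : 0 ≤ M * Real.exp (-2 * (T + 1)) := by positivity
      have e3 : η * (K + 1) ≤ η * Real.exp K :=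
        mul_le_mul_of_nonneg_left (Real.add_one_le_exp K) hη.le
      linarith [a1.2, a2.1])
    (by
      intro t ht
      rw [hder]
      simp only [hψ]
      have e1 : Real.exp (-(K * T)) ≤ Real.exp (K * (t - T)) := by
        apply Real.exp_le_exp.2
        have := mul_nonneg hK0.le ht.1
        linarith
      have e2 := mul_le_mul_of_nonneg_left e1 hη.le
      have e3 : 0 ≤ η * (Real.exp (K * (t - T)) * K) := by positivity
      have e4 : 0 < η * Real.exp (-(K * T)) := by positivity
      linarith)
    x T ⟨hT, by linarith⟩
  simpa [hψ] using this

/-- Proposition 5.1: exponential decay of `u₁ - u₂` when `H₁ = H₂`. -/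
theorem stmt13 (n : ℕ) (hn : 1 ≤ n) (H : En n → En n → ℝ)
    (hHcont : Continuous fun q : En n × En n => H q.1 q.2)
    (hHper : ZPeriodicH H) (hHcoer : Coercive H)
    (u₀₁ u₀₂ : En n → ℝ) (hu₀₁ : IsLip u₀₁) (hu₀₂ : IsLip u₀₂)
    (hu₀₁per : ZPeriodic u₀₁) (hu₀₂per : ZPeriodic u₀₂)
    (u₁ u₂ : En n × ℝ → ℝ) (hu₁per : ZPeriodicST u₁) (hu₂per : ZPeriodicST u₂)
    (hsol : SysSolution H H u₀₁ u₀₂ u₁ u₂) :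
    (∀ (x : En n) (t : ℝ), 0 ≤ t →
      |u₁ (x, t) - u₂ (x, t)| ≤ (⨆ y : En n, |u₀₁ y - u₀₂ y|) * Real.exp (-2 * t)) ∧
    UnifTendsTo (fun q => u₁ q - u₂ q) (fun _ => 0) := by
  obtain ⟨c1, c2, ⟨s1, s2⟩, ⟨p1, p2⟩, i1, i2⟩ := hsol
  have hK : IsCompact ({0} : Set ℝ) := isCompact_singleton
  have hss : (univ : Set (En n)) ×ˢ ({0} : Set ℝ) ⊆ {q : En n × ℝ | 0 ≤ q.2} := by
    intro q hq
    have : q.2 = 0 := hq.2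
    simp [this]
  obtain ⟨C1, hC1⟩ := sh_bdd u₁ {0} hK (c1.mono hss) hu₁per
  obtain ⟨C2, hC2⟩ := sh_bdd u₂ {0} hK (c2.mono hss) hu₂per
  have hb : BddAbove (range fun y : En n => |u₀₁ y - u₀₂ y|) := by
    refine ⟨C1 + C2, ?_⟩
    rintro _ ⟨y, rfl⟩
    have a1 := hC1 y 0 rfl
    have a2 := hC2 y 0 rfl
    rw [i1] at a1
    rw [i2] at a2
    exact (abs_sub _ _).trans (add_le_add a1 a2)
  have hM : ∀ y, |u₀₁ y - u₀₂ y| ≤ ⨆ y : En n, |u₀₁ y - u₀₂ y| := fun y => le_ciSup hb y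
  set M : ℝ := ⨆ y : En n, |u₀₁ y - u₀₂ y| with hMdef
  have hM0 : 0 ≤ M := (abs_nonneg _).trans (hM 0)
  have main : ∀ (x : En n) (t : ℝ), 0 ≤ t →
      |u₁ (x, t) - u₂ (x, t)| ≤ M * Real.exp (-2 * t) := by
    intro x t ht
    rw [abs_le']
    constructor
    · exact sh_half H hHcont hHper hHcoer u₁ u₂ hu₁per hu₂per c1 c2 s1 p2 M hM0
        (fun y => by rw [i1, i2]; exact (le_abs_self _).trans (hM y)) x t ht
    · rw [neg_sub]
      exact sh_half H hHcont hHper hHcoer u₂ u₁ hu₂per hu₁per c2 c1 s2 p1 M hM0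
        (fun y => by
          rw [i1, i2, ← neg_sub]; exact (neg_le_abs _).trans (hM y)) x t ht
  refine ⟨main, ?_⟩
  intro ε hε
  refine ⟨M / ε, fun t ht x => ?_⟩
  have ht0 : 0 ≤ t := le_trans (by positivity) ht
  have h := main x t ht0
  simp only [sub_zero]
  refine h.trans ?_
  have h1 : M ≤ t * ε := (div_le_iff₀ hε).1 ht
  have h2 : t ≤ Real.exp (2 * t) := by linarith [Real.add_one_le_exp (2 * t)]
  have h3 : M ≤ ε * Real.exp (2 * t) := by nlinarith
  calc M * Real.exp (-2 * t) ≤ ε * Real.exp (2 * t) * Real.exp (-2 * t) :=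
        mul_le_mul_of_nonneg_right h3 (Real.exp_pos _).le
    _ = ε := by rw [mul_assoc, ← Real.exp_add]; simp
end

section
/- Assume H := H₁ = H₂ is continuous and satisfies (A1), and let (u₁, u₂) be the viscosity solution of (C) with Lipschitz continuous initial data. Define γ(t) := max_{x ∈ 𝕋^n} (u₁(x,t) − u₂(x,t)). Then γ is a viscosity subsolution of the ODE γ'(t) + 2γ(t) = 0 in (0,∞): for every C¹ function φ on (0,∞) and every local maximum point τ > 0 of γ − φ, one has φ'(τ) + 2γ(τ) ≤ 0. -/
open MeasureTheory Filter Topology Set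

theorem s14_test_contDiff {n : ℕ} (h : ℝ → ℝ) (hh : ContDiff ℝ 1 h) (A : ℝ) (y : En n) :
    ContDiff ℝ 1 (fun q : En n × ℝ => h q.2 + A * ‖q.1 - y‖ ^ 2) := by
  have h1 : ContDiff ℝ 1 (fun q : En n × ℝ => h q.2) := hh.comp contDiff_snd
  have h2 : ContDiff ℝ 1 (fun q : En n × ℝ => ‖q.1 - y‖ ^ 2) :=
    (contDiff_fst.sub contDiff_const).norm_sq ℝ
  exact h1.add (contDiff_const.mul h2)

theorem s14_test_grad {n : ℕ} (c : ℝ) (A : ℝ) (x y : En n) :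
    gradient (fun z : En n => c + A * ‖z - y‖ ^ 2) x = (2 * A) • (x - y) := by
  apply HasGradientAt.gradient
  rw [hasGradientAt_iff_hasFDerivAt]
  have h1 : HasFDerivAt (fun z : En n => z - y) (ContinuousLinearMap.id ℝ (En n)) x :=
    (hasFDerivAt_id x).sub_const y
  have h2 := (h1.norm_sq.const_mul A).const_add c
  refine h2.congr_fderiv ?_
  ext v
  simp
  ring

theorem s14_test_time {n : ℕ} (h : ℝ → ℝ) (hh : ContDiff ℝ 1 h) (A : ℝ) (x y : En n) (t : ℝ) :
    fderiv ℝ (fun q : En n × ℝ => h q.2 + A * ‖q.1 - y‖ ^ 2) (x, t) (0, 1) = deriv h t := by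
  have hd : DifferentiableAt ℝ (fun q : En n × ℝ => h q.2 + A * ‖q.1 - y‖ ^ 2) (x, t) :=
    (s14_test_contDiff h hh A y).differentiable one_ne_zero _
  have hl : HasDerivAt (fun s : ℝ => ((x, s) : En n × ℝ)) ((0 : En n), (1 : ℝ)) t :=
    (hasDerivAt_const t x).prodMk (hasDerivAt_id t)
  have h1 := hd.hasFDerivAt.comp_hasDerivAt t hl
  have h2 : HasDerivAt (fun s : ℝ => h s + A * ‖x - y‖ ^ 2) (deriv h t) t :=
    ((hh.differentiable one_ne_zero t).hasDerivAt).add_const _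
  exact h1.unique h2

theorem s14_shift {n : ℕ} (x : En n) : ∃ k : Fin n → ℤ, ‖x + intVec n k‖ ≤ n := by
  refine ⟨fun i => -⌊x i⌋, ?_⟩
  rw [EuclideanSpace.norm_eq]
  apply Real.sqrt_le_iff.2
  refine ⟨by positivity, ?_⟩
  calc ∑ i, ‖(x + intVec n fun i => -⌊x i⌋) i‖ ^ 2 ≤ ∑ i : Fin n, (1 : ℝ) := by
        apply Finset.sum_le_sum
        intro i _
        have : (x + intVec n fun i => -⌊x i⌋) i = Int.fract (x i) := by
          simp [intVec, Int.fract, sub_eq_add_neg]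
        rw [this, Real.norm_eq_abs, sq_abs]
        have h0 := Int.fract_nonneg (x i)
        have h1 := (Int.fract_lt_one (x i)).le
        nlinarith
    _ ≤ (n : ℝ) ^ 2 := by
        simp
        rcases Nat.eq_zero_or_pos n with h | h
        · simp [h]
        · have : (1 : ℝ) ≤ n := by exact_mod_cast h
          nlinarith

/-- Inequalities at a maximum point of the doubled function. -/
theorem s14_doubling {n : ℕ} (H : En n → En n → ℝ) (u₁ u₂ : En n × ℝ → ℝ)
    (hsub : EvolSubIneq H u₁ u₂) (hsup : EvolSuperIneq H u₂ u₁)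
    (φ : ℝ → ℝ) (hφ : ContDiff ℝ 1 φ) (τ r A B : ℝ)
    (x y : En n) (t s : ℝ) (ht0 : 0 < t) (hs0 : 0 < s)
    (hxy : ‖x - y‖ < 1) (ht : t ∈ Ioo (τ - r) (τ + r)) (hs : s ∈ Ioo (τ - r) (τ + r))
    (hmax : ∀ x' y' : En n, ∀ t' ∈ Icc (τ - r) (τ + r), ∀ s' ∈ Icc (τ - r) (τ + r),
      ‖x' - y'‖ ≤ 1 →
      u₁ (x', t') - u₂ (y', s') - φ t' - (t' - τ) ^ 2 - B * (t' - s') ^ 2 - A * ‖x' - y'‖ ^ 2 ≤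
      u₁ (x, t) - u₂ (y, s) - φ t - (t - τ) ^ 2 - B * (t - s) ^ 2 - A * ‖x - y‖ ^ 2) :
    deriv φ t + 2 * (t - τ) + 2 * B * (t - s) + H x ((2 * A) • (x - y))
      + u₁ (x, t) - u₂ (x, t) ≤ 0 ∧
    0 ≤ 2 * B * (t - s) + H y ((2 * A) • (x - y)) + u₂ (y, s) - u₁ (y, s) := by
  constructor
  · have hh : ContDiff ℝ 1 (fun t' : ℝ => φ t' + (t' - τ) ^ 2 + B * (t' - s) ^ 2) := by
      fun_prop
    have key := hsub _ (s14_test_contDiff _ hh A y) x t ht0 ?_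
    · rw [s14_test_time _ hh A x y t] at key
      dsimp only at key
      rw [s14_test_grad] at key
      have hd : deriv (fun t' : ℝ => φ t' + (t' - τ) ^ 2 + B * (t' - s) ^ 2) t
          = deriv φ t + 2 * (t - τ) + 2 * B * (t - s) := by
        apply HasDerivAt.deriv
        have h1 := (hφ.differentiable one_ne_zero t).hasDerivAt
        have h2 := ((hasDerivAt_id t).sub_const τ).pow 2
        have h3 := (((hasDerivAt_id t).sub_const s).pow 2).const_mul B
        refine HasDerivAt.congr_deriv (f := fun t' : ℝ => φ t' + (t' - τ) ^ 2 + B * (t' - s) ^ 2)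
          ((h1.add h2).add h3) ?_
        simp
        ring
      rw [hd] at key
      exact key
    · have e1 : ∀ᶠ q : En n × ℝ in 𝓝 (x, t), ‖q.1 - y‖ < 1 :=
        (ContinuousAt.eventually_lt (by fun_prop) (by fun_prop) hxy)
      have e2 : ∀ᶠ q : En n × ℝ in 𝓝 (x, t), q.2 ∈ Ioo (τ - r) (τ + r) :=
        (continuous_snd.continuousAt (x := (x, t))).eventually (isOpen_Ioo.mem_nhds ht)
      filter_upwards [e1, e2] with q h1 h2
      have := hmax q.1 y q.2 (Ioo_subset_Icc_self h2) s (Ioo_subset_Icc_self hs) h1.le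
      simp only [Prod.mk.eta] at this
      linarith
  · have hh : ContDiff ℝ 1 (fun s' : ℝ => -B * (t - s') ^ 2) := by
      fun_prop
    have key := hsup _ (s14_test_contDiff _ hh (-A) x) y s hs0 ?_
    · rw [s14_test_time _ hh (-A) y x s] at key
      dsimp only at key
      rw [s14_test_grad] at key
      have hd : deriv (fun s' : ℝ => -B * (t - s') ^ 2) s = 2 * B * (t - s) := by
        apply HasDerivAt.deriv
        have h3 := (((hasDerivAt_id s).const_sub t).pow 2).const_mul (-B)
        refine HasDerivAt.congr_deriv (f := fun s' : ℝ => -B * (t - s') ^ 2) h3 ?_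
        simp
        ring
      have he : (2 * -A) • (y - x) = (2 * A) • (x - y) := by
        rw [← neg_sub x y, smul_neg, ← neg_smul]; congr 1; ring
      rw [hd, he] at key
      exact key
    · have hyx : ‖x - y‖ < 1 := hxy
      have e1 : ∀ᶠ q : En n × ℝ in 𝓝 (y, s), ‖x - q.1‖ < 1 :=
        (ContinuousAt.eventually_lt (by fun_prop) (by fun_prop) hxy)
      have e2 : ∀ᶠ q : En n × ℝ in 𝓝 (y, s), q.2 ∈ Ioo (τ - r) (τ + r) :=
        (continuous_snd.continuousAt (x := (y, s))).eventually (isOpen_Ioo.mem_nhds hs)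
      filter_upwards [e1, e2] with q h1 h2
      have := hmax x q.1 t (Ioo_subset_Icc_self ht) q.2 (Ioo_subset_Icc_self h2) h1.le
      simp only [Prod.mk.eta] at this
      rw [norm_sub_rev q.1 x, norm_sub_rev y x]
      linarith

/-- Existence of a maximum point of the doubled function. -/
theorem s14_exists_max {n : ℕ} (u₁ u₂ : En n × ℝ → ℝ)
    (hu₁per : ZPeriodicST u₁) (hu₂per : ZPeriodicST u₂)
    (φ : ℝ → ℝ) (hφ : Continuous φ) (τ r A B : ℝ) (hr : 0 < r) (hrτ : r < τ)
    (hc1 : ContinuousOn u₁ {q : En n × ℝ | 0 ≤ q.2})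
    (hc2 : ContinuousOn u₂ {q : En n × ℝ | 0 ≤ q.2}) :
    ∃ x y : En n, ∃ t s : ℝ, ‖x‖ ≤ n ∧ ‖y‖ ≤ n + 1 ∧ t ∈ Icc (τ - r) (τ + r) ∧
      s ∈ Icc (τ - r) (τ + r) ∧
      ∀ x' y' : En n, ∀ t' ∈ Icc (τ - r) (τ + r), ∀ s' ∈ Icc (τ - r) (τ + r),
      ‖x' - y'‖ ≤ 1 →
      u₁ (x', t') - u₂ (y', s') - φ t' - (t' - τ) ^ 2 - B * (t' - s') ^ 2 - A * ‖x' - y'‖ ^ 2 ≤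
      u₁ (x, t) - u₂ (y, s) - φ t - (t - τ) ^ 2 - B * (t - s) ^ 2 - A * ‖x - y‖ ^ 2 := by
  set I := Icc (τ - r) (τ + r) with hI
  set K : Set ((En n × ℝ) × (En n × ℝ)) :=
    (Metric.closedBall 0 (n : ℝ) ×ˢ I) ×ˢ (Metric.closedBall 0 ((n : ℝ) + 1) ×ˢ I) with hK
  have hKc : IsCompact K :=
    ((isCompact_closedBall _ _).prod isCompact_Icc).prod
      ((isCompact_closedBall _ _).prod isCompact_Icc)
  have hKn : K.Nonempty := by
    refine ⟨((0, τ), (0, τ)), ?_⟩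
    simp only [hK, hI, mem_prod, Metric.mem_closedBall, dist_self, mem_Icc]
    refine ⟨⟨by positivity, by linarith, by linarith⟩, by positivity, by linarith, by linarith⟩
  have hcont : ContinuousOn (fun z : (En n × ℝ) × (En n × ℝ) =>
      u₁ z.1 - u₂ z.2 - φ z.1.2 - (z.1.2 - τ) ^ 2 - B * (z.1.2 - z.2.2) ^ 2
        - A * ‖z.1.1 - z.2.1‖ ^ 2) K := by
    have c1 : ContinuousOn (fun z : (En n × ℝ) × (En n × ℝ) => u₁ z.1) K := by
      refine hc1.comp continuous_fst.continuousOn ?_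
      rintro z ⟨⟨_, h⟩, _⟩
      have := h.1
      show 0 ≤ z.1.2
      linarith
    have c2 : ContinuousOn (fun z : (En n × ℝ) × (En n × ℝ) => u₂ z.2) K := by
      refine hc2.comp continuous_snd.continuousOn ?_
      rintro z ⟨_, ⟨_, h⟩⟩
      have := h.1
      show 0 ≤ z.2.2
      linarith
    have c3 : Continuous (fun z : (En n × ℝ) × (En n × ℝ) => φ z.1.2) := by fun_prop
    have c4 : Continuous (fun z : (En n × ℝ) × (En n × ℝ) => (z.1.2 - τ) ^ 2) := by fun_prop
    have c5 : Continuous (fun z : (En n × ℝ) × (En n × ℝ) => B * (z.1.2 - z.2.2) ^ 2) := by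
      fun_prop
    have c6 : Continuous (fun z : (En n × ℝ) × (En n × ℝ) => A * ‖z.1.1 - z.2.1‖ ^ 2) := by
      fun_prop
    exact ((((c1.sub c2).sub c3.continuousOn).sub c4.continuousOn).sub
      c5.continuousOn).sub c6.continuousOn
  obtain ⟨⟨⟨x, t⟩, ⟨y, s⟩⟩, hz, hm⟩ := hKc.exists_isMaxOn hKn hcont
  obtain ⟨⟨hx, ht⟩, ⟨hy, hs⟩⟩ := hz
  refine ⟨x, y, t, s, by simpa using hx, by simpa using hy, ht, hs, ?_⟩
  intro x' y' t' ht' s' hs' hxy'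
  obtain ⟨k, hk⟩ := s14_shift x'
  have hmem : ((x' + intVec n k, t'), (y' + intVec n k, s')) ∈ K := by
    refine ⟨⟨by simpa using hk, ht'⟩, ⟨?_, hs'⟩⟩
    rw [mem_closedBall_zero_iff]
    calc ‖y' + intVec n k‖ = ‖(x' + intVec n k) - (x' - y')‖ := by congr 1; abel
      _ ≤ ‖x' + intVec n k‖ + ‖x' - y'‖ := norm_sub_le _ _
      _ ≤ n + 1 := add_le_add hk hxy'
  have := hm hmem
  simp only [mem_ofPred_eq, hu₁per x' k t', hu₂per y' k s', add_sub_add_right_eq_sub] at this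
  exact this

theorem s14_small {A C ρ d : ℝ} (hρ : 0 < ρ) (hC : 0 ≤ C) (hA : A = (C + 1) / ρ ^ 2)
    (h : A * d ^ 2 ≤ C) : |d| < ρ := by
  have h1 : (C + 1) * d ^ 2 ≤ C * ρ ^ 2 := by
    rw [hA, div_mul_eq_mul_div, div_le_iff₀ (by positivity)] at h
    exact h
  apply abs_lt_of_sq_lt_sq _ hρ.le
  have : 0 < ρ ^ 2 := by positivity
  nlinarith [sq_nonneg d]

set_option maxHeartbeats 2000000

/-- Lemma 5.2: `γ(t) = max_x (u₁ - u₂)(x,t)` is a viscosity subsolution of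
`γ' + 2γ = 0` in `(0,∞)`. -/
theorem stmt14 (n : ℕ) (hn : 1 ≤ n) (H : En n → En n → ℝ)
    (hHcont : Continuous fun q : En n × En n => H q.1 q.2)
    (hHper : ZPeriodicH H) (hHcoer : Coercive H)
    (u₀₁ u₀₂ : En n → ℝ) (hu₀₁ : IsLip u₀₁) (hu₀₂ : IsLip u₀₂)
    (hu₀₁per : ZPeriodic u₀₁) (hu₀₂per : ZPeriodic u₀₂)
    (u₁ u₂ : En n × ℝ → ℝ) (hu₁per : ZPeriodicST u₁) (hu₂per : ZPeriodicST u₂)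
    (hsol : SysSolution H H u₀₁ u₀₂ u₁ u₂) :
    ∀ φ : ℝ → ℝ, ContDiff ℝ 1 φ → ∀ τ : ℝ, 0 < τ →
      IsLocalMax (fun t => (⨆ x : En n, (u₁ (x, t) - u₂ (x, t))) - φ t) τ →
      deriv φ τ + 2 * (⨆ x : En n, (u₁ (x, τ) - u₂ (x, τ))) ≤ 0 := by
  intro φ hφ τ hτ hloc
  obtain ⟨hc1, hc2, ⟨hsub, -⟩, ⟨-, hsup⟩, -, -⟩ := hsol
  set γ : ℝ → ℝ := fun t => ⨆ x : En n, (u₁ (x, t) - u₂ (x, t)) with hγ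
  change deriv φ τ + 2 * γ τ ≤ 0
  have hφc : Continuous φ := hφ.continuous
  have hφ'c : Continuous (deriv φ) := hφ.continuous_deriv le_rfl
  -- localisation
  obtain ⟨r, hr, hrτ, hrmax⟩ : ∃ r : ℝ, 0 < r ∧ r < τ ∧
      ∀ t ∈ Icc (τ - r) (τ + r), γ t - φ t ≤ γ τ - φ τ := by
    obtain ⟨e, he, hball⟩ := Metric.eventually_nhds_iff.1 hloc
    refine ⟨min (e / 2) (τ / 2), by positivity, ?_, ?_⟩
    · have := min_le_right (e / 2) (τ / 2); linarith
    · intro t ht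
      have h1 := min_le_left (e / 2) (τ / 2)
      refine hball ?_
      rw [Real.dist_eq, abs_lt]
      constructor <;> linarith [ht.1, ht.2]
  set I := Icc (τ - r) (τ + r) with hI
  have hτI : τ ∈ I := ⟨by linarith, by linarith⟩
  set K : Set (En n × ℝ) := Metric.closedBall 0 ((n : ℝ) + 1) ×ˢ I with hK
  have hKc : IsCompact K := (isCompact_closedBall _ _).prod isCompact_Icc
  have hKsub : K ⊆ {q : En n × ℝ | 0 ≤ q.2} := by
    rintro q ⟨_, h⟩
    have := h.1
    show 0 ≤ q.2
    linarith
  have hk1 := hc1.mono hKsub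
  have hk2 := hc2.mono hKsub
  obtain ⟨M1, hM1⟩ := hKc.exists_bound_of_continuousOn hk1
  obtain ⟨M2, hM2⟩ := hKc.exists_bound_of_continuousOn hk2
  have hbd : ∀ t ∈ I, ∀ x, u₁ (x, t) - u₂ (x, t) ≤ M1 + M2 := by
    intro t ht x
    obtain ⟨k, hk⟩ := s14_shift x
    have hm : (x + intVec n k, t) ∈ K := ⟨by rw [mem_closedBall_zero_iff]; linarith, ht⟩
    have a1 := (abs_le.1 (hM1 _ hm)).2
    have a2 := (abs_le.1 (hM2 _ hm)).1
    rw [hu₁per] at a1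
    rw [hu₂per] at a2
    linarith
  have hγge : ∀ t ∈ I, ∀ x, u₁ (x, t) - u₂ (x, t) ≤ γ t := by
    intro t ht x
    exact le_ciSup (f := fun x => u₁ (x, t) - u₂ (x, t))
      ⟨M1 + M2, by rintro _ ⟨x, rfl⟩; exact hbd t ht x⟩ x
  obtain ⟨Mφ, hMφ⟩ := (isCompact_Icc (a := τ - r) (b := τ + r)).exists_bound_of_continuousOn
    hφc.continuousOn
  obtain ⟨C, hC0, hC⟩ : ∃ C : ℝ, 0 ≤ C ∧ M1 + M2 + Mφ - (γ τ - φ τ) ≤ C :=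
    ⟨_, le_max_left 0 _, le_max_right _ _⟩
  apply le_of_forall_pos_le_add
  intro η₀ hη₀
  set η := η₀ / 8 with hη
  have hηp : 0 < η := by positivity
  -- moduli for φ
  obtain ⟨r', hr', hr'r, hr'η, hφ1, hφ2⟩ : ∃ r' : ℝ, 0 < r' ∧ r' ≤ r / 2 ∧ 2 * r' ≤ η ∧
      (∀ t, |t - τ| ≤ r' → |φ t - φ τ| ≤ η) ∧
      (∀ t, |t - τ| ≤ r' → |deriv φ t - deriv φ τ| ≤ η) := by
    obtain ⟨d1, hd1, h1⟩ := Metric.continuousAt_iff.1 (hφc.continuousAt (x := τ)) η hηp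
    obtain ⟨d2, hd2, h2⟩ := Metric.continuousAt_iff.1 (hφ'c.continuousAt (x := τ)) η hηp
    have m1 := min_le_left (min (d1 / 2) (d2 / 2)) (min (r / 2) (η / 2))
    have m2 := min_le_right (min (d1 / 2) (d2 / 2)) (min (r / 2) (η / 2))
    have m3 := min_le_left (d1 / 2) (d2 / 2)
    have m4 := min_le_right (d1 / 2) (d2 / 2)
    have m5 := min_le_left (r / 2) (η / 2)
    have m6 := min_le_right (r / 2) (η / 2)
    refine ⟨min (min (d1 / 2) (d2 / 2)) (min (r / 2) (η / 2)), by positivity, by linarith,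
      by linarith, ?_, ?_⟩
    · intro t ht
      exact (h1 (by rw [Real.dist_eq]; linarith)).le
    · intro t ht
      exact (h2 (by rw [Real.dist_eq]; linarith)).le
  -- modulus for u
  set η' := min η (r' ^ 2) with hη'
  have hη'p : 0 < η' := by positivity
  have hη'1 : η' ≤ η := min_le_left _ _
  have hη'2 : η' ≤ r' ^ 2 := min_le_right _ _
  obtain ⟨ρ, hρ, hρ1, hρr, hu1, hu2⟩ : ∃ ρ : ℝ, 0 < ρ ∧ ρ ≤ 1 ∧ ρ ≤ r / 4 ∧
      (∀ p ∈ K, ∀ q ∈ K, ‖p.1 - q.1‖ < ρ → |p.2 - q.2| < ρ → |u₁ p - u₁ q| ≤ η') ∧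
      (∀ p ∈ K, ∀ q ∈ K, ‖p.1 - q.1‖ < ρ → |p.2 - q.2| < ρ → |u₂ p - u₂ q| ≤ η') := by
    obtain ⟨d1, hd1, h1⟩ := Metric.uniformContinuousOn_iff.1
      (hKc.uniformContinuousOn_of_continuous hk1) η' hη'p
    obtain ⟨d2, hd2, h2⟩ := Metric.uniformContinuousOn_iff.1
      (hKc.uniformContinuousOn_of_continuous hk2) η' hη'p
    have m1 := min_le_left (min d1 d2) (min 1 (r / 4))
    have m2 := min_le_right (min d1 d2) (min 1 (r / 4))
    have m3 := min_le_left d1 d2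
    have m4 := min_le_right d1 d2
    have m5 := min_le_left 1 (r / 4)
    have m6 := min_le_right 1 (r / 4)
    refine ⟨min (min d1 d2) (min 1 (r / 4)), by positivity, by linarith, by linarith, ?_, ?_⟩
    · intro p hp q hq a b
      refine (h1 p hp q hq ?_).le
      rw [Prod.dist_eq, dist_eq_norm, Real.dist_eq]
      exact max_lt (by linarith) (by linarith)
    · intro p hp q hq a b
      refine (h2 p hp q hq ?_).le
      rw [Prod.dist_eq, dist_eq_norm, Real.dist_eq]
      exact max_lt (by linarith) (by linarith)
  -- time penalisation
  obtain ⟨B, hB⟩ : ∃ B : ℝ, B = (C + 1) / ρ ^ 2 := ⟨_, rfl⟩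
  have hB0 : 0 < B := by rw [hB]; positivity
  -- coercivity
  obtain ⟨P, hP⟩ := hHcoer (M1 + M2 + |deriv φ τ| + 2 * η + 2 * B * ρ + 1)
  -- modulus for H
  obtain ⟨ρ₂, hρ₂, hHu⟩ : ∃ ρ₂ : ℝ, 0 < ρ₂ ∧ ∀ x y p : En n, ‖x‖ ≤ n + 1 → ‖y‖ ≤ n + 1 →
      ‖p‖ ≤ P → ‖x - y‖ < ρ₂ → |H x p - H y p| ≤ η := by
    have hc : IsCompact (Metric.closedBall (0 : En n) ((n : ℝ) + 1) ×ˢ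
      Metric.closedBall (0 : En n) P) := (isCompact_closedBall _ _).prod (isCompact_closedBall _ _)
    obtain ⟨d1, hd1, h1⟩ := Metric.uniformContinuousOn_iff.1
      (hc.uniformContinuousOn_of_continuous hHcont.continuousOn) η hηp
    refine ⟨d1, hd1, fun x y p hx hy hp hxy => ?_⟩
    refine (h1 (x, p) ⟨by simpa using hx, by simpa using hp⟩ (y, p)
      ⟨by simpa using hy, by simpa using hp⟩ ?_).le
    rw [Prod.dist_eq, dist_self, dist_eq_norm]
    exact max_lt hxy hd1
  set ρ₃ := min ρ ρ₂ with hρ₃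
  have hρ₃p : 0 < ρ₃ := by positivity
  obtain ⟨A, hA⟩ : ∃ A : ℝ, A = (C + 1) / ρ₃ ^ 2 := ⟨_, rfl⟩
  have hA0 : 0 < A := by rw [hA]; positivity
  obtain ⟨x, y, t, s, hx, hy, ht, hs, hmax⟩ := s14_exists_max u₁ u₂ hu₁per hu₂per φ hφc τ r A B
    hr hrτ hc1 hc2
  -- lower bound by the diagonal value
  have hlow : γ τ - φ τ ≤
      u₁ (x, t) - u₂ (y, s) - φ t - (t - τ) ^ 2 - B * (t - s) ^ 2 - A * ‖x - y‖ ^ 2 := by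
    have : γ τ ≤ φ τ +
        (u₁ (x, t) - u₂ (y, s) - φ t - (t - τ) ^ 2 - B * (t - s) ^ 2 - A * ‖x - y‖ ^ 2) := by
      refine ciSup_le fun z => ?_
      have := hmax z z τ hτI τ hτI (by simp)
      simp only [sub_self, norm_zero] at this
      norm_num at this
      linarith
    linarith
  have hmx : (x, t) ∈ K := ⟨by rw [mem_closedBall_zero_iff]; linarith, ht⟩
  have hmy : (y, s) ∈ K := ⟨by rw [mem_closedBall_zero_iff]; linarith, hs⟩
  have hmxs : (x, s) ∈ K := ⟨by rw [mem_closedBall_zero_iff]; linarith, hs⟩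
  have q1 : 0 ≤ (t - τ) ^ 2 := sq_nonneg _
  have q2 : 0 ≤ B * (t - s) ^ 2 := by positivity
  have q3 : 0 ≤ A * ‖x - y‖ ^ 2 := by positivity
  have a1 := (abs_le.1 (hM1 _ hmx))
  have a2 := (abs_le.1 (hM2 _ hmy))
  have a2' := (abs_le.1 (hM2 _ hmx))
  have a3 := (abs_le.1 (hMφ t ht))
  have hts : |t - s| < ρ := s14_small hρ hC0 hB (by linarith)
  have hxy : ‖x - y‖ < ρ₃ := by
    have := s14_small (d := ‖x - y‖) hρ₃p hC0 hA (by linarith)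
    rwa [abs_of_nonneg (norm_nonneg _)] at this
  have hxyρ : ‖x - y‖ < ρ := hxy.trans_le (min_le_left _ _)
  have hxyρ₂ : ‖x - y‖ < ρ₂ := hxy.trans_le (min_le_right _ _)
  have b1 := abs_le.1 (hu1 _ hmx _ hmy hxyρ hts)
  have b2 := abs_le.1 (hu2 _ hmx _ hmy hxyρ hts)
  have g1 := hγge t ht x
  have g2 := hrmax t ht
  have htτ : |t - τ| ≤ r' := by
    apply abs_le_of_sq_le_sq _ hr'.le
    linarith
  have c1 := abs_le.1 htτ
  have c2 := abs_lt.1 hts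
  have htI : t ∈ Ioo (τ - r) (τ + r) := ⟨by linarith, by linarith⟩
  have hsI : s ∈ Ioo (τ - r) (τ + r) := ⟨by linarith, by linarith⟩
  obtain ⟨k1, k2⟩ := s14_doubling H u₁ u₂ hsub hsup φ hφ τ r A B x y t s
    (by linarith [htI.1]) (by linarith [hsI.1]) (by linarith) htI hsI hmax
  have f1 := abs_le.1 (hφ1 t htτ)
  have f2 := abs_le.1 (hφ2 t htτ)
  have hBt : -(B * ρ) ≤ B * (t - s) := by
    have := mul_le_mul_of_nonneg_left c2.1.le hB0.le
    linarith only [this]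
  have hp : ‖(2 * A) • (x - y)‖ ≤ P := by
    by_contra hcon
    push Not at hcon
    have := hP x _ hcon.le
    have := neg_abs_le (deriv φ τ)
    linarith
  have hHd := abs_le.1 (hHu x y _ (by linarith) hy hp hxyρ₂)
  linarith
end

section
/- (Key Lemma.) Assume Case 3 and let C be the constant in the normalization 1 ≤ u_i(x,t) − v(x) ≤ C. Define F(r) := Cr for r ≥ 0 and F(r) := r/C for r < 0. (i) If (A8)⁺ holds, then for every η ∈ (0,η₀] there exists s_η > 0 such that (α_η⁺, β_η⁺) is a viscosity supersolution of the system max{α' + (ψ_η/C)(α − 1) + F(α − β), α − 1} = 0, max{β' + (ψ_η/C)(β − 1) + F(β − α), β − 1} = 0 in (s_η, ∞); that is, whenever φ ∈ C¹ and α_η⁺ − φ has a local minimum at σ > s_η, then max{φ'(σ) + (ψ_η/C)(α_η⁺(σ) − 1) + F(α_η⁺(σ) − β_η⁺(σ)), α_η⁺(σ) − 1} ≥ 0, and symmetrically for β_η⁺. (ii) If (A8)⁻ holds, then for every η ∈ (0,η₀] there exists s_η > 0 such that (α_η⁻, β_η⁻) is a viscosity subsolution of the system min{α' + (ψ_η/C)·(α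 − 1)/α + F(α − β), α − 1} = 0, min{β' + (ψ_η/C)·(β − 1)/β + F(β − α), β − 1} = 0 in (s_η, ∞); that is, whenever φ ∈ C¹ and α_η⁻ − φ has a local maximum at σ > s_η, then min{φ'(σ) + (ψ_η/C)·(α_η⁻(σ) − 1)/α_η⁻(σ) + F(α_η⁻(σ) − β_η⁻(σ)), α_η⁻(σ) − 1} ≤ 0, and symmetrically for β_η⁻. -/
open MeasureTheory Filter Topology Set

/-! ## Helper material -/

theorem kl_grad2 {n : ℕ} (A c₁ c₂ : ℝ) (x y z : En n) :
    HasGradientAt (fun x : En n => A + c₁ * ‖x - y‖ ^ 2 + c₂ * ‖x - z‖ ^ 2)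
      ((2 * c₁) • (x - y) + (2 * c₂) • (x - z)) x := by
  rw [hasGradientAt_iff_hasFDerivAt]
  have h1 : ∀ w : En n, HasFDerivAt (fun x : En n => ‖x - w‖ ^ 2) (2 • (innerSL ℝ) (x - w)) x := by
    intro w
    have := (hasStrictFDerivAt_norm_sq (x - w)).hasFDerivAt.comp x
      ((hasFDerivAt_id x).sub_const w)
    exact this.congr_fderiv (by ext; simp)
  have h2 := (((h1 y).const_mul c₁).const_add A).add ((h1 z).const_mul c₂)
  refine h2.congr_fderiv ?_
  ext w
  simp
  ring

theorem kl_fderiv_time {n : ℕ} (φ : En n × ℝ → ℝ) (hφ : ContDiff ℝ 1 φ) (x : En n) (t d : ℝ)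
    (h : HasDerivAt (fun s => φ (x, s)) d t) : fderiv ℝ φ (x, t) (0, 1) = d := by
  have h1 : HasFDerivAt φ (fderiv ℝ φ (x, t)) (x, t) :=
    (hφ.differentiable one_ne_zero).differentiableAt.hasFDerivAt
  have h2 : HasDerivAt (fun s : ℝ => ((x, s) : En n × ℝ)) (0, 1) t :=
    (hasDerivAt_const t x).prodMk (hasDerivAt_id t)
  have h3 := h1.comp_hasDerivAt t h2
  exact h3.unique h

structure KlC1 (f f₁ f₂ : ℝ → ℝ → ℝ) : Prop where
  c0 : Continuous (fun q : ℝ × ℝ => f q.1 q.2)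
  c1 : Continuous (fun q : ℝ × ℝ => f₁ q.1 q.2)
  c2 : Continuous (fun q : ℝ × ℝ => f₂ q.1 q.2)
  d1 : ∀ t r, HasDerivAt (fun t => f t r) (f₁ t r) t
  d2 : ∀ t r, HasDerivAt (fun r => f t r) (f₂ t r) r

theorem KlC1.cd1 {f f₁ f₂ : ℝ → ℝ → ℝ} (h : KlC1 f f₁ f₂) (r : ℝ) :
    ContDiff ℝ 1 (fun t => f t r) := by
  rw [contDiff_one_iff_deriv]
  refine ⟨fun t => (h.d1 t r).differentiableAt, ?_⟩
  have : deriv (fun t => f t r) = fun t => f₁ t r := funext fun t => (h.d1 t r).deriv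
  rw [this]
  exact h.c1.comp (Continuous.prodMk continuous_id continuous_const)

theorem KlC1.cd2 {f f₁ f₂ : ℝ → ℝ → ℝ} (h : KlC1 f f₁ f₂) (t : ℝ) :
    ContDiff ℝ 1 (fun r => f t r) := by
  rw [contDiff_one_iff_deriv]
  refine ⟨fun r => (h.d2 t r).differentiableAt, ?_⟩
  have : deriv (fun r => f t r) = fun r => f₂ t r := funext fun r => (h.d2 t r).deriv
  rw [this]
  exact h.c2.comp (Continuous.prodMk continuous_const continuous_id)

def KlSub {n : ℕ} (H : En n → En n → ℝ) (c W : En n × ℝ → ℝ) : Prop :=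
  ∀ φ : En n × ℝ → ℝ, ContDiff ℝ 1 φ → ∀ (x : En n) (t : ℝ), 0 < t →
    IsLocalMax (fun q => W q - φ q) (x, t) →
    fderiv ℝ φ (x, t) (0, 1) + H x (gradient (fun y => φ (y, t)) x) ≤ c (x, t)

def KlSup {n : ℕ} (H : En n → En n → ℝ) (c W : En n × ℝ → ℝ) : Prop :=
  ∀ φ : En n × ℝ → ℝ, ContDiff ℝ 1 φ → ∀ (x : En n) (t : ℝ), 0 < t →
    IsLocalMin (fun q => W q - φ q) (x, t) →
    c (x, t) ≤ fderiv ℝ φ (x, t) (0, 1) + H x (gradient (fun y => φ (y, t)) x)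

def klCube (n : ℕ) : Set (En n) := {x | ∀ i, x i ∈ Icc (0 : ℝ) 1}

theorem klCube_compact (n : ℕ) : IsCompact (klCube n) := by
  have h := (isCompact_univ_pi (fun _ : Fin n => isCompact_Icc (a := (0 : ℝ)) (b := 1))).image
    (PiLp.continuous_toLp 2 (fun _ : Fin n => ℝ))
  convert h using 1
  ext x
  constructor
  · intro hx
    exact ⟨WithLp.ofLp x, fun i _ => hx i, rfl⟩
  · rintro ⟨y, hy, rfl⟩ i
    exact hy i (mem_univ _)

theorem klCube_shift {n : ℕ} (x : En n) : ∃ k : Fin n → ℤ, x + intVec n k ∈ klCube n := by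
  refine ⟨fun i => -⌊x i⌋, fun i => ?_⟩
  have h1 := Int.floor_le (x i)
  have h2 := Int.lt_floor_add_one (x i)
  simp only [intVec, PiLp.add_apply, Int.cast_neg, mem_Icc]
  constructor <;> linarith

theorem kl_ultra {X : Type*} [TopologicalSpace X] {s : Set X} (hs : IsCompact s) (g : ℕ → X)
    (hg : ∀ᶠ N in (hyperfilter ℕ : Filter ℕ), g N ∈ s) :
    ∃ a ∈ s, Tendsto g (hyperfilter ℕ : Filter ℕ) (𝓝 a) := by
  obtain ⟨a, ha, h⟩ := hs.ultrafilter_le_nhds' ((hyperfilter ℕ).map g) hg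
  exact ⟨a, ha, h⟩

theorem kl_hyper_atTop : (hyperfilter ℕ : Filter ℕ) ≤ atTop := by
  rw [← Nat.cofinite_eq_atTop]; exact hyperfilter_le_cofinite

theorem kl_inv_tendsto (c : ℝ) :
    Tendsto (fun N : ℕ => c / ((N : ℝ) + 1)) (hyperfilter ℕ : Filter ℕ) (𝓝 0) := by
  have h := (tendsto_one_div_add_atTop_nhds_zero_nat (𝕜 := ℝ)).const_mul c
  simp only [mul_zero] at h
  refine (h.congr ?_).mono_left kl_hyper_atTop
  intro N; ring

noncomputable def klPsi {n : ℕ} (U W : En n × ℝ → ℝ) (v : En n → ℝ) (μ Θ : ℝ → ℝ → ℝ) (M : ℝ)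
    (x e f : En n) (t r : ℝ) : ℝ :=
  U (x, t) - μ t r * W (x + e, r) - (1 - μ t r) * v (x + f) + Θ t r + M * ‖e‖ ^ 2 + M * ‖f‖ ^ 2

theorem kl_step {n : ℕ} {H : En n → En n → ℝ} {U W cU cW : En n × ℝ → ℝ} {v : En n → ℝ}
    {μ μ₁ μ₂ Θ Θ₁ Θ₂ : ℝ → ℝ → ℝ} (hμ : KlC1 μ μ₁ μ₂) (hΘ : KlC1 Θ Θ₁ Θ₂)
    (hμpos : ∀ t r, 0 < μ t r) {S : Set (ℝ × ℝ)}
    (hv : SingleSub H v 0) (hU : KlSup H cU U) (hW : KlSub H cW W)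
    {M : ℝ} (hM : 0 < M) {x e f : En n} {t r : ℝ} (ht : 0 < t) (hr : 0 < r)
    (he : ‖e‖ < 1) (hf : ‖f‖ < 1) (hS : S ∈ 𝓝 (t, r)) (hμ1 : μ t r ≤ 1)
    (hmin : ∀ (x' e' f' : En n) (t' r' : ℝ), ‖e'‖ ≤ 1 → ‖f'‖ ≤ 1 → (t', r') ∈ S →
      klPsi U W v μ Θ M x e f t r ≤ klPsi U W v μ Θ M x' e' f' t' r') :
    ∃ Q R : En n, (μ t r < 1 → H (x + f) R ≤ 0) ∧ (¬ μ t r < 1 → R = 0) ∧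
      cU (x, t) ≤ μ₁ t r * (W (x + e, r) - v (x + f)) - Θ₁ t r
        + H x (μ t r • Q + (1 - μ t r) • R) ∧
      (Θ₂ t r - μ₂ t r * (W (x + e, r) - v (x + f))) / μ t r + H (x + e) Q ≤ cW (x + e, r) := by
  have hμ0 := hμpos t r
  have hStr : (t, r) ∈ S := mem_of_mem_nhds hS
  have hfz : ¬ μ t r < 1 → f = 0 := by
    intro h
    have h1 : μ t r = 1 := le_antisymm hμ1 (not_lt.1 h)
    have h2 := hmin x e 0 t r he.le (by simp) hStr
    simp only [klPsi, h1, norm_zero] at h2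
    have h3 : M * ‖f‖ ^ 2 ≤ 0 := by linarith
    have h4 : ‖f‖ ^ 2 ≤ 0 := by
      by_contra h5
      push Not at h5
      nlinarith [mul_pos hM h5]
    have h5 : ‖f‖ = 0 := by nlinarith [norm_nonneg f]
    exact norm_eq_zero.1 h5
  refine ⟨(2 * (M / μ t r)) • e, (2 * (M / (1 - μ t r))) • f, ?_, ?_, ?_, ?_⟩
  · intro hlt
    have h1μ : 0 < 1 - μ t r := by linarith
    have key := hv (fun y => 0 + (M / (1 - μ t r)) * ‖y - x‖ ^ 2 + 0 * ‖y - x‖ ^ 2) ?_ (x + f) ?_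
    · rw [(kl_grad2 0 (M / (1 - μ t r)) 0 (x + f) x x).gradient] at key
      simpa using key
    · have h1 : ContDiff ℝ 1 (fun y : En n => ‖y - x‖ ^ 2) :=
        (contDiff_id.sub contDiff_const).norm_sq ℝ
      exact (contDiff_const.add (contDiff_const.mul h1)).add (contDiff_const.mul h1)
    · have hev : ∀ᶠ y : En n in 𝓝 (x + f), ‖y - x‖ < 1 := by
        have hc : Continuous (fun y : En n => ‖y - x‖) := by fun_prop
        exact hc.continuousAt.eventually_lt continuousAt_const (by simpa using hf)
      filter_upwards [hev] with y hy
      have h2 := hmin x e (y - x) t r he.le hy.le hStr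
      simp only [klPsi, add_sub_cancel] at h2
      simp only [add_sub_cancel_left, zero_add, zero_mul, add_zero]
      have h3 : (1 - μ t r) * (v y - M / (1 - μ t r) * ‖y - x‖ ^ 2)
          ≤ (1 - μ t r) * (v (x + f) - M / (1 - μ t r) * ‖f‖ ^ 2) := by
        have e1 : ∀ a b : ℝ, (1 - μ t r) * (a - M / (1 - μ t r) * b) = (1 - μ t r) * a - M * b := by
          intro a b; field_simp
        rw [e1, e1]; linarith
      exact le_of_mul_le_mul_left h3 h1μ
  · intro h
    simp [hfz h]
  · set φ : En n × ℝ → ℝ := fun q =>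
      (μ q.2 r * W (x + e, r) + (1 - μ q.2 r) * v (x + f) - Θ q.2 r)
        + (-M) * ‖q.1 - (x + e)‖ ^ 2 + (-M) * ‖q.1 - (x + f)‖ ^ 2 with hφ
    have hφc : ContDiff ℝ 1 φ := by
      have a1 : ContDiff ℝ 1 (fun q : En n × ℝ => μ q.2 r) := (hμ.cd1 r).comp contDiff_snd
      have a2 : ContDiff ℝ 1 (fun q : En n × ℝ => Θ q.2 r) := (hΘ.cd1 r).comp contDiff_snd
      have a3 : ∀ w : En n, ContDiff ℝ 1 (fun q : En n × ℝ => ‖q.1 - w‖ ^ 2) := fun w =>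
        (contDiff_fst.sub contDiff_const).norm_sq ℝ
      exact ((((a1.mul contDiff_const).add ((contDiff_const.sub a1).mul contDiff_const)).sub a2).add
        (contDiff_const.mul (a3 _))).add (contDiff_const.mul (a3 _))
    have key := hU φ hφc x t ht ?_
    · have hd : HasDerivAt (fun s => φ (x, s))
          (μ₁ t r * (W (x + e, r) - v (x + f)) - Θ₁ t r) t := by
        have b1 := hμ.d1 t r
        have b2 := hΘ.d1 t r
        have b3 := (((((b1.mul_const (W (x + e, r))).add ((b1.const_sub 1).mul_const
          (v (x + f)))).sub b2).add_const (-M * ‖x - (x + e)‖ ^ 2))).add_const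
          (-M * ‖x - (x + f)‖ ^ 2)
        refine b3.congr_deriv ?_
        ring
      rw [kl_fderiv_time φ hφc x t _ hd] at key
      have hg : gradient (fun y => φ (y, t)) x = μ t r • ((2 * (M / μ t r)) • e)
          + (1 - μ t r) • ((2 * (M / (1 - μ t r))) • f) := by
        rw [show (fun y => φ (y, t)) = (fun y : En n =>
          (μ t r * W (x + e, r) + (1 - μ t r) * v (x + f) - Θ t r)
        + (-M) * ‖y - (x + e)‖ ^ 2 + (-M) * ‖y - (x + f)‖ ^ 2) from rfl,
          (kl_grad2 _ (-M) (-M) x (x + e) (x + f)).gradient]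
        have c1 : μ t r • ((2 * (M / μ t r)) • e) = (2 * M) • e := by
          rw [smul_smul]; congr 1; field_simp
        have c2 : (1 - μ t r) • ((2 * (M / (1 - μ t r))) • f) = (2 * M) • f := by
          by_cases h : μ t r < 1
          · have : (1 - μ t r) ≠ 0 := by linarith
            rw [smul_smul]; congr 1; field_simp
          · simp [hfz h]
        rw [c1, c2]
        simp
      rw [hg] at key
      exact key
    · have hev : ∀ᶠ q : En n × ℝ in 𝓝 (x, t),
          ‖(x + e) - q.1‖ < 1 ∧ ‖(x + f) - q.1‖ < 1 ∧ (q.2, r) ∈ S := by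
        have hc : ∀ w : En n, Continuous (fun q : En n × ℝ => ‖w - q.1‖) := fun w => by fun_prop
        have hc2 : Continuous (fun q : En n × ℝ => (q.2, r)) := by fun_prop
        refine ((hc _).continuousAt.eventually_lt continuousAt_const (by simpa using he)).and
          (((hc _).continuousAt.eventually_lt continuousAt_const (by simpa using hf)).and ?_)
        exact hc2.continuousAt.eventually_mem hS
      filter_upwards [hev] with q hq
      have h2 := hmin q.1 (x + e - q.1) (x + f - q.1) q.2 r hq.1.le hq.2.1.le hq.2.2
      simp only [klPsi, add_sub_cancel] at h2
      simp only [hφ]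
      rw [norm_sub_rev q.1, norm_sub_rev q.1]
      simp only [sub_add_cancel_left, norm_neg]
      have : U q = U (q.1, q.2) := rfl
      rw [this]
      linarith
  · set m := klPsi U W v μ Θ M x e f t r with hm
    set X : ℝ → ℝ := fun s => U (x, t) - (1 - μ t s) * v (x + f) + Θ t s + M * ‖f‖ ^ 2 - m with hX
    set φ : En n × ℝ → ℝ := fun q =>
      X q.2 / μ t q.2 + (M / μ t q.2) * ‖q.1 - x‖ ^ 2 + 0 * ‖q.1 - x‖ ^ 2 with hφ
    have hXv : X r + M * ‖e‖ ^ 2 = μ t r * W (x + e, r) := by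
      simp only [hX, hm, klPsi]; ring
    have hφc : ContDiff ℝ 1 φ := by
      have a1 : ContDiff ℝ 1 (fun q : En n × ℝ => μ t q.2) := (hμ.cd2 t).comp contDiff_snd
      have a2 : ContDiff ℝ 1 (fun q : En n × ℝ => Θ t q.2) := (hΘ.cd2 t).comp contDiff_snd
      have a3 : ∀ w : En n, ContDiff ℝ 1 (fun q : En n × ℝ => ‖q.1 - w‖ ^ 2) := fun w =>
        (contDiff_fst.sub contDiff_const).norm_sq ℝ
      have a4 : ContDiff ℝ 1 (fun q : En n × ℝ => X q.2) :=
        (((contDiff_const.sub ((contDiff_const.sub a1).mul contDiff_const)).add a2).add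
          contDiff_const).sub contDiff_const
      exact ((a4.div a1 fun q => (hμpos _ _).ne').add
        ((contDiff_const.div a1 fun q => (hμpos _ _).ne').mul (a3 x))).add
          (contDiff_const.mul (a3 x))
    have key := hW φ hφc (x + e) r hr ?_
    · have hd : HasDerivAt (fun s => φ (x + e, s))
          ((Θ₂ t r - μ₂ t r * (W (x + e, r) - v (x + f))) / μ t r) r := by
        have b1 := hμ.d2 t r
        have b2 := hΘ.d2 t r
        have b3 : HasDerivAt X (μ₂ t r * v (x + f) + Θ₂ t r) r := by
          have := (((((b1.const_sub 1).mul_const (v (x + f))).const_sub (U (x, t))).add b2).add_const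
            (M * ‖f‖ ^ 2)).sub_const m
          refine this.congr_deriv ?_
          ring
        have b4 := (b3.add_const (M * ‖e‖ ^ 2)).div b1 hμ0.ne'
        have b5 : (fun s => φ (x + e, s)) = (fun s => (X s + M * ‖e‖ ^ 2) / μ t s) := by
          funext s
          simp only [hφ, add_sub_cancel_left]
          ring
        rw [b5]
        refine b4.congr_deriv ?_
        rw [hXv]
        field_simp
        ring
      rw [kl_fderiv_time φ hφc (x + e) r _ hd] at key
      have hg : gradient (fun y => φ (y, r)) (x + e) = (2 * (M / μ t r)) • e := by
        rw [show (fun y => φ (y, r)) = (fun y : En n =>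
          X r / μ t r + (M / μ t r) * ‖y - x‖ ^ 2 + 0 * ‖y - x‖ ^ 2) from rfl,
          (kl_grad2 _ (M / μ t r) 0 (x + e) x x).gradient]
        simp
      rw [hg] at key
      exact key
    · have hev : ∀ᶠ q : En n × ℝ in 𝓝 (x + e, r), ‖q.1 - x‖ < 1 ∧ (t, q.2) ∈ S := by
        have hc : Continuous (fun q : En n × ℝ => ‖q.1 - x‖) := by fun_prop
        have hc2 : Continuous (fun q : En n × ℝ => (t, q.2)) := by fun_prop
        refine (hc.continuousAt.eventually_lt continuousAt_const (by simpa using he)).and ?_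
        exact hc2.continuousAt.eventually_mem hS
      filter_upwards [hev] with q hq
      have h2 := hmin x (q.1 - x) f t q.2 hq.1.le hf.le hq.2
      simp only [klPsi, add_sub_cancel] at h2
      have hq0 := hμpos t q.2
      have e1 : W (x + e, r) - φ (x + e, r) = 0 := by
        have : φ (x + e, r) = (X r + M * ‖e‖ ^ 2) / μ t r := by
          simp only [hφ, add_sub_cancel_left]; ring
        rw [this, hXv]; field_simp; ring
      have e2 : W q ≤ φ q := by
        have : φ q = (X q.2 + M * ‖q.1 - x‖ ^ 2) / μ t q.2 := by
          simp only [hφ]; ring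
        rw [this, le_div_iff₀ hq0]
        have : W q = W (q.1, q.2) := rfl
        rw [this]
        simp only [hX]
        linarith
      linarith

theorem kl_doubling {n : ℕ} {H : En n → En n → ℝ}
    (hHc : Continuous fun q : En n × En n => H q.1 q.2) (hHco : Coercive H)
    {U W cU cW : En n × ℝ → ℝ} {v : En n → ℝ}
    {μ μ₁ μ₂ Θ Θ₁ Θ₂ : ℝ → ℝ → ℝ} (hμ : KlC1 μ μ₁ μ₂) (hΘ : KlC1 Θ Θ₁ Θ₂)
    (hμpos : ∀ t r, 0 < μ t r) {S : Set (ℝ × ℝ)} (hScomp : IsCompact S)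
    (hS0 : ∀ q ∈ S, 0 ≤ q.1 ∧ 0 ≤ q.2) (hμ1 : ∀ q ∈ S, μ q.1 q.2 ≤ 1)
    (hv : SingleSub H v 0) (hvc : Continuous v) (hvp : ZPeriodic v)
    (hU : KlSup H cU U) (hW : KlSub H cW W) (hUp : ZPeriodicST U) (hWp : ZPeriodicST W)
    (hUc : ContinuousOn U {q : En n × ℝ | 0 ≤ q.2}) (hWc : ContinuousOn W {q : En n × ℝ | 0 ≤ q.2})
    (hcUc : ContinuousOn cU {q : En n × ℝ | 0 ≤ q.2})
    (hcWc : ContinuousOn cW {q : En n × ℝ | 0 ≤ q.2})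
    (Φ : En n → ℝ → ℝ → ℝ)
    (hΦ : ∀ x t r, Φ x t r = U (x, t) - μ t r * W (x, r) - (1 - μ t r) * v x + Θ t r)
    (hneg : ∃ x t r, (t, r) ∈ S ∧ Φ x t r < 0)
    (hbd : ∀ x t r, (t, r) ∈ S → Φ x t r < 0 → S ∈ 𝓝 (t, r)) :
    ∃ (x : En n) (t r : ℝ) (P Q R : En n), x ∈ klCube n ∧ (t, r) ∈ S ∧ Φ x t r < 0 ∧
      (∀ x' t' r', (t', r') ∈ S → Φ x t r ≤ Φ x' t' r') ∧
      P = μ t r • Q + (1 - μ t r) • R ∧ (μ t r < 1 → H x R ≤ 0) ∧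
      cU (x, t) ≤ μ₁ t r * (W (x, r) - v x) - Θ₁ t r + H x P ∧
      (Θ₂ t r - μ₂ t r * (W (x, r) - v x)) / μ t r + H x Q ≤ cW (x, r) := by
  classical
  set F : Filter ℕ := (hyperfilter ℕ : Filter ℕ) with hF
  let Y := En n × En n × En n × (ℝ × ℝ)
  let K : Set Y := klCube n ×ˢ (Metric.closedBall (0 : En n) 1 ×ˢ
    (Metric.closedBall (0 : En n) 1 ×ˢ S))
  have hK : IsCompact K := (klCube_compact n).prod
    ((isCompact_closedBall _ _).prod ((isCompact_closedBall _ _).prod hScomp))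
  let ps : ℝ → Y → ℝ := fun M p => klPsi U W v μ Θ M p.1 p.2.1 p.2.2.1 p.2.2.2.1 p.2.2.2.2
  have hpsK : ∀ M, ContinuousOn (ps M) K := by
    intro M
    have hm : Continuous (fun p : Y => μ p.2.2.2.1 p.2.2.2.2) := hμ.c0.comp (by fun_prop)
    have ht : Continuous (fun p : Y => Θ p.2.2.2.1 p.2.2.2.2) := hΘ.c0.comp (by fun_prop)
    have hvv : Continuous (fun p : Y => v (p.1 + p.2.2.1)) := hvc.comp (by fun_prop)
    have hu : ContinuousOn (fun p : Y => U (p.1, p.2.2.2.1)) K := by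
      refine hUc.comp (f := fun p : Y => (p.1, p.2.2.2.1)) (Continuous.continuousOn (by fun_prop)) ?_
      intro p hp
      exact (hS0 _ hp.2.2.2).1
    have hw : ContinuousOn (fun p : Y => W (p.1 + p.2.1, p.2.2.2.2)) K := by
      refine hWc.comp (f := fun p : Y => (p.1 + p.2.1, p.2.2.2.2))
        (Continuous.continuousOn (by fun_prop)) ?_
      intro p hp
      exact (hS0 _ hp.2.2.2).2
    have hn1 : Continuous (fun p : Y => M * ‖p.2.1‖ ^ 2) := by fun_prop
    have hn2 : Continuous (fun p : Y => M * ‖p.2.2.1‖ ^ 2) := by fun_prop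
    exact ((((hu.sub (hm.continuousOn.mul hw)).sub
      ((continuous_const.sub hm).mul hvv).continuousOn).add ht.continuousOn).add
      hn1.continuousOn).add hn2.continuousOn
  -- shifting into the cube
  have hshift : ∀ M (x e f : En n) (t r : ℝ), ∃ x₁ ∈ klCube n,
      klPsi U W v μ Θ M x e f t r = klPsi U W v μ Θ M x₁ e f t r := by
    intro M x e f t r
    obtain ⟨k, hk⟩ := klCube_shift x
    refine ⟨_, hk, ?_⟩
    simp only [klPsi, add_right_comm x (intVec n k)]
    rw [hUp, hWp, hvp]
  obtain ⟨x₀, t₀, r₀, hS₀, hneg₀⟩ := hneg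
  have hne : K.Nonempty := by
    obtain ⟨k, hk⟩ := klCube_shift x₀
    exact ⟨(x₀ + intVec n k, 0, 0, (t₀, r₀)), hk, by simp, by simp, hS₀⟩
  have hex : ∀ N : ℕ, ∃ p ∈ K, IsMinOn (ps ((N : ℝ) + 1)) K p := fun N =>
    hK.exists_isMinOn hne (hpsK _)
  choose p hpK hpmin using hex
  have hglob : ∀ (N : ℕ) (x e f : En n) (t r : ℝ), ‖e‖ ≤ 1 → ‖f‖ ≤ 1 → (t, r) ∈ S →
      ps ((N : ℝ) + 1) (p N) ≤ klPsi U W v μ Θ ((N : ℝ) + 1) x e f t r := by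
    intro N x e f t r he hf hS
    obtain ⟨x₁, hx₁, h⟩ := hshift ((N : ℝ) + 1) x e f t r
    rw [h]
    exact hpmin N (show (x₁, e, f, (t, r)) ∈ K from
      ⟨hx₁, by simpa using he, by simpa using hf, hS⟩)
  have hdiag : ∀ M (x : En n) (t r : ℝ), klPsi U W v μ Θ M x 0 0 t r = Φ x t r := by
    intro M x t r
    rw [hΦ]; simp [klPsi]
  have hle : ∀ (N : ℕ) (x : En n) (t r : ℝ), (t, r) ∈ S → ps ((N : ℝ) + 1) (p N) ≤ Φ x t r := by
    intro N x t r hS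
    rw [← hdiag ((N : ℝ) + 1)]
    exact hglob N x 0 0 t r (by simp) (by simp) hS
  -- limit point
  obtain ⟨q, hqK, hq⟩ := kl_ultra hK p (Eventually.of_forall hpK)
  obtain ⟨c, -, hc⟩ := hK.exists_isMinOn hne (hpsK 0)
  have hsplit : ∀ (N : ℕ), ps ((N : ℝ) + 1) (p N) = ps 0 (p N)
      + ((N : ℝ) + 1) * ‖(p N).2.1‖ ^ 2 + ((N : ℝ) + 1) * ‖(p N).2.2.1‖ ^ 2 := by
    intro N
    simp only [ps, klPsi]; ring
  have hN1 : ∀ N : ℕ, (0 : ℝ) < (N : ℝ) + 1 := fun N => by positivity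
  have hsq : ∀ N : ℕ, ‖(p N).2.1‖ ^ 2 ≤ (- ps 0 c) / ((N : ℝ) + 1) ∧
      ‖(p N).2.2.1‖ ^ 2 ≤ (- ps 0 c) / ((N : ℝ) + 1) := by
    intro N
    have h1 := hle N x₀ t₀ r₀ hS₀
    have h2 : ps 0 c ≤ ps 0 (p N) := hc (hpK N)
    rw [hsplit] at h1
    have h3 : 0 ≤ ((N : ℝ) + 1) * ‖(p N).2.1‖ ^ 2 := by positivity
    have h4 : 0 ≤ ((N : ℝ) + 1) * ‖(p N).2.2.1‖ ^ 2 := by positivity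
    constructor
    · rw [le_div_iff₀ (hN1 N)]; linarith
    · rw [le_div_iff₀ (hN1 N)]; linarith
  have hz : ∀ g : ℕ → En n, (∀ N, ‖g N‖ ^ 2 ≤ (- ps 0 c) / ((N : ℝ) + 1)) →
      Tendsto g F (𝓝 0) := by
    intro g hg
    have h1 : Tendsto (fun N => ‖g N‖ ^ 2) F (𝓝 0) :=
      tendsto_of_tendsto_of_tendsto_of_le_of_le tendsto_const_nhds (kl_inv_tendsto (- ps 0 c))
        (fun N => by positivity) hg
    have h2 := h1.sqrt
    simp only [Real.sqrt_zero, Real.sqrt_sq (norm_nonneg _)] at h2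
    exact tendsto_zero_iff_norm_tendsto_zero.2 h2
  have he0 := hz (fun N => (p N).2.1) fun N => (hsq N).1
  have hf0 := hz (fun N => (p N).2.2.1) fun N => (hsq N).2
  have hcx : Tendsto (fun N => (p N).1) F (𝓝 q.1) := (continuous_fst.tendsto q).comp hq
  have hce : Tendsto (fun N => (p N).2.1) F (𝓝 q.2.1) :=
    ((by fun_prop : Continuous fun y : Y => y.2.1).tendsto q).comp hq
  have hcf : Tendsto (fun N => (p N).2.2.1) F (𝓝 q.2.2.1) :=
    ((by fun_prop : Continuous fun y : Y => y.2.2.1).tendsto q).comp hq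
  have hcs : Tendsto (fun N => (p N).2.2.2) F (𝓝 q.2.2.2) :=
    ((by fun_prop : Continuous fun y : Y => y.2.2.2).tendsto q).comp hq
  have hqe : q.2.1 = 0 := tendsto_nhds_unique hce he0
  have hqf : q.2.2.1 = 0 := tendsto_nhds_unique hcf hf0
  obtain ⟨ξ, eI, fI, t, r⟩ := q
  simp only at hqe hqf hcx hcs
  subst hqe hqf
  have hStr : (t, r) ∈ S := hqK.2.2.2
  have hlim0 : Tendsto (fun N => ps 0 (p N)) F (𝓝 (Φ ξ t r)) := by
    have h1 := (hpsK 0) _ hqK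
    have h2 : Tendsto p F (𝓝[K] (ξ, 0, 0, t, r)) :=
      tendsto_nhdsWithin_iff.2 ⟨hq, Eventually.of_forall hpK⟩
    have h3 := h1.tendsto.comp h2
    rw [← hdiag 0 ξ t r]
    exact h3
  have hmin : ∀ x' t' r', (t', r') ∈ S → Φ ξ t r ≤ Φ x' t' r' := by
    intro x' t' r' hS'
    refine le_of_tendsto hlim0 (Eventually.of_forall fun N => ?_)
    have h1 := hle N x' t' r' hS'
    rw [hsplit] at h1
    have h3 : 0 ≤ ((N : ℝ) + 1) * ‖(p N).2.1‖ ^ 2 := by positivity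
    have h4 : 0 ≤ ((N : ℝ) + 1) * ‖(p N).2.2.1‖ ^ 2 := by positivity
    linarith
  have hΦneg : Φ ξ t r < 0 := lt_of_le_of_lt (hmin _ _ _ hS₀) hneg₀
  have hSn : S ∈ 𝓝 (t, r) := hbd ξ t r hStr hΦneg
  have hpos : ∀ a b : ℝ, S ∈ 𝓝 (a, b) → 0 < a ∧ 0 < b := by
    intro a b hab
    constructor
    · have hc : Tendsto (fun s : ℝ => (s, b)) (𝓝 a) (𝓝 (a, b)) :=
        (by fun_prop : Continuous fun s : ℝ => (s, b)).tendsto a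
      obtain ⟨l, hl, hl2⟩ := (((hc.eventually_mem hab).filter_mono
        (nhdsWithin_le_nhds (s := Iio a))).and self_mem_nhdsWithin).exists
      have := (hS0 _ hl).1
      exact lt_of_le_of_lt this hl2
    · have hc : Tendsto (fun s : ℝ => (a, s)) (𝓝 b) (𝓝 (a, b)) :=
        (by fun_prop : Continuous fun s : ℝ => (a, s)).tendsto b
      obtain ⟨l, hl, hl2⟩ := (((hc.eventually_mem hab).filter_mono
        (nhdsWithin_le_nhds (s := Iio b))).and self_mem_nhdsWithin).exists
      have := (hS0 _ hl).2
      exact lt_of_le_of_lt this hl2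
  -- abbreviations for the sequences
  set X : ℕ → En n := fun N => (p N).1 with hX
  set E : ℕ → En n := fun N => (p N).2.1 with hE
  set G : ℕ → En n := fun N => (p N).2.2.1 with hG
  set τ : ℕ → ℝ := fun N => (p N).2.2.2.1 with hτ
  set ρ : ℕ → ℝ := fun N => (p N).2.2.2.2 with hρ
  have hSmem : ∀ N, (τ N, ρ N) ∈ S := fun N => (hpK N).2.2.2
  have hgood : ∀ᶠ N in F, ‖E N‖ < 1 ∧ ‖G N‖ < 1 ∧ S ∈ 𝓝 (τ N, ρ N) := by
    refine (he0.norm.eventually_lt tendsto_const_nhds (by simp)).and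
      ((hf0.norm.eventually_lt tendsto_const_nhds (by simp)).and ?_)
    exact hcs.eventually (eventually_mem_nhds_iff.2 hSn)
  have hstep : ∀ N, ∃ QR : En n × En n, (‖E N‖ < 1 ∧ ‖G N‖ < 1 ∧ S ∈ 𝓝 (τ N, ρ N)) →
      ((μ (τ N) (ρ N) < 1 → H (X N + G N) QR.2 ≤ 0) ∧ (¬ μ (τ N) (ρ N) < 1 → QR.2 = 0) ∧
      cU (X N, τ N) ≤ μ₁ (τ N) (ρ N) * (W (X N + E N, ρ N) - v (X N + G N)) - Θ₁ (τ N) (ρ N)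
        + H (X N) (μ (τ N) (ρ N) • QR.1 + (1 - μ (τ N) (ρ N)) • QR.2) ∧
      (Θ₂ (τ N) (ρ N) - μ₂ (τ N) (ρ N) * (W (X N + E N, ρ N) - v (X N + G N))) / μ (τ N) (ρ N)
        + H (X N + E N) QR.1 ≤ cW (X N + E N, ρ N)) := by
    intro N
    by_cases h : (‖E N‖ < 1 ∧ ‖G N‖ < 1 ∧ S ∈ 𝓝 (τ N, ρ N))
    · obtain ⟨Q, R, h'⟩ := kl_step hμ hΘ hμpos hv hU hW (hN1 N) (hpos _ _ h.2.2).1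
        (hpos _ _ h.2.2).2 h.1 h.2.1 h.2.2 (hμ1 _ (hSmem N))
        (fun x' e' f' t' r' h1 h2 h3 => hglob N x' e' f' t' r' h1 h2 h3) (x := X N)
      exact ⟨(Q, R), fun _ => h'⟩
    · exact ⟨0, fun h' => absurd h' h⟩
  choose QR hQR using hstep
  -- limits of the coefficients
  have hs' : Tendsto (fun N => ((τ N, ρ N) : ℝ × ℝ)) F (𝓝 (t, r)) := hcs
  have lim2 : ∀ g : ℝ → ℝ → ℝ, Continuous (fun q : ℝ × ℝ => g q.1 q.2) →
      Tendsto (fun N => g (τ N) (ρ N)) F (𝓝 (g t r)) := fun g hg => (hg.tendsto (t, r)).comp hs'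
  have lμ := lim2 μ hμ.c0
  have lμ₁ := lim2 μ₁ hμ.c1
  have lμ₂ := lim2 μ₂ hμ.c2
  have lΘ₁ := lim2 Θ₁ hΘ.c1
  have lΘ₂ := lim2 Θ₂ hΘ.c2
  have lτ : Tendsto τ F (𝓝 t) := (continuous_fst.tendsto (t, r)).comp hs'
  have lρ : Tendsto ρ F (𝓝 r) := (continuous_snd.tendsto (t, r)).comp hs'
  have lXE : Tendsto (fun N => X N + E N) F (𝓝 ξ) := by simpa using hcx.add he0
  have lXG : Tendsto (fun N => X N + G N) F (𝓝 ξ) := by simpa using hcx.add hf0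
  have limc : ∀ (g : En n × ℝ → ℝ) (Z : ℕ → En n) (s : ℕ → ℝ) (b : ℝ),
      ContinuousOn g {q : En n × ℝ | 0 ≤ q.2} → Tendsto Z F (𝓝 ξ) → Tendsto s F (𝓝 b) →
      (∀ N, 0 ≤ s N) → 0 ≤ b → Tendsto (fun N => g (Z N, s N)) F (𝓝 (g (ξ, b))) := by
    intro g Z s b hg hZ hs h0 hb
    have h1 := (hg (ξ, b) hb).tendsto
    exact h1.comp (tendsto_nhdsWithin_iff.2 ⟨hZ.prodMk_nhds hs, Eventually.of_forall h0⟩)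
  have lcU := limc cU X τ t hcUc hcx lτ (fun N => (hS0 _ (hSmem N)).1) (hS0 _ hStr).1
  have lcW := limc cW _ ρ r hcWc lXE lρ (fun N => (hS0 _ (hSmem N)).2) (hS0 _ hStr).2
  have lW := limc W _ ρ r hWc lXE lρ (fun N => (hS0 _ (hSmem N)).2) (hS0 _ hStr).2
  have lv : Tendsto (fun N => v (X N + G N)) F (𝓝 (v ξ)) := (hvc.tendsto ξ).comp lXG
  have lb := (lΘ₂.sub (lμ₂.mul (lW.sub lv))).div lμ (hμpos t r).ne'
  have la := (lμ₁.mul (lW.sub lv)).sub lΘ₁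
  -- boundedness of Q, R
  obtain ⟨B, hB⟩ := hHco (cW (ξ, r) - (Θ₂ t r - μ₂ t r * (W (ξ, r) - v ξ)) / μ t r + 1)
  obtain ⟨B', hB'⟩ := hHco 1
  have hQb : ∀ᶠ N in F, QR N ∈ Metric.closedBall (0 : En n) B ×ˢ
      Metric.closedBall (0 : En n) (max B' 0) := by
    have hlt := (lcW.sub lb).eventually_lt_const (lt_add_one _)
    filter_upwards [hgood, hlt] with N h1 h2
    obtain ⟨k1, k2, k3, k4⟩ := hQR N h1
    constructor
    · rw [mem_closedBall_zero_iff]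
      by_contra hcon
      push Not at hcon
      have := hB (X N + E N) (QR N).1 hcon.le
      simp only [Pi.div_apply] at h2
      linarith
    · rw [mem_closedBall_zero_iff]
      by_cases hm : μ (τ N) (ρ N) < 1
      · refine le_max_of_le_left ?_
        by_contra hcon
        push Not at hcon
        have := hB' (X N + G N) (QR N).2 hcon.le
        have := k1 hm
        linarith
      · rw [k2 hm]; simp
  obtain ⟨⟨Q, R⟩, -, hlQR⟩ := kl_ultra ((isCompact_closedBall _ _).prod (isCompact_closedBall _ _))
    QR hQb
  have lQ : Tendsto (fun N => (QR N).1) F (𝓝 Q) := (continuous_fst.tendsto _).comp hlQR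
  have lR : Tendsto (fun N => (QR N).2) F (𝓝 R) := (continuous_snd.tendsto _).comp hlQR
  have lP := (lμ.smul lQ).add ((tendsto_const_nhds.sub lμ (a := (1 : ℝ))).smul lR)
  have limH : ∀ (Z A : ℕ → En n) (b : En n), Tendsto Z F (𝓝 ξ) → Tendsto A F (𝓝 b) →
      Tendsto (fun N => H (Z N) (A N)) F (𝓝 (H ξ b)) := fun Z A b hZ hA =>
    (hHc.tendsto (ξ, b)).comp (hZ.prodMk_nhds hA)
  refine ⟨ξ, t, r, μ t r • Q + (1 - μ t r) • R, Q, R, hqK.1, hStr, hΦneg, hmin, rfl, ?_, ?_, ?_⟩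
  · intro hlt
    refine le_of_tendsto (limH _ _ _ lXG lR) ?_
    filter_upwards [hgood, lμ.eventually_lt_const hlt] with N h1 h2
    exact (hQR N h1).1 h2
  · refine le_of_tendsto_of_tendsto lcU (la.add (limH _ _ _ hcx lP)) ?_
    filter_upwards [hgood] with N h1
    exact (hQR N h1).2.2.1
  · refine le_of_tendsto_of_tendsto (lb.add (limH _ _ _ lXE lQ)) lcW ?_
    filter_upwards [hgood] with N h1
    exact (hQR N h1).2.2.2

structure KlD {n : ℕ} (H : En n → En n → ℝ) (v : En n → ℝ) (C : ℝ) (u w : En n × ℝ → ℝ) : Prop where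
  hc : Continuous fun q : En n × En n => H q.1 q.2
  hper : ZPeriodicH H
  hco : Coercive H
  vs : SingleSub H v 0
  vc : Continuous v
  vp : ZPeriodic v
  up : ZPeriodicST u
  wp : ZPeriodicST w
  uc : ContinuousOn u {q : En n × ℝ | 0 ≤ q.2}
  wc : ContinuousOn w {q : En n × ℝ | 0 ≤ q.2}
  usub : KlSub H (fun q => w q - u q) u
  usup : KlSup H (fun q => w q - u q) u
  wsub : KlSub H (fun q => u q - w q) w
  wsup : KlSup H (fun q => u q - w q) w
  bu : ∀ x t, 0 ≤ t → 1 ≤ u (x, t) - v x ∧ u (x, t) - v x ≤ C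
  bw : ∀ x t, 0 ≤ t → 1 ≤ w (x, t) - v x ∧ w (x, t) - v x ≤ C
  ul : IsLip (fun x => u (x, 0))
  wl : IsLip (fun x => w (x, 0))

theorem KlD.symm {n : ℕ} {H : En n → En n → ℝ} {v : En n → ℝ} {C : ℝ} {u w : En n × ℝ → ℝ}
    (d : KlD H v C u w) : KlD H v C w u :=
  ⟨d.hc, d.hper, d.hco, d.vs, d.vc, d.vp, d.wp, d.up, d.wc, d.uc, d.wsub, d.wsup, d.usub, d.usup,
    d.bw, d.bu, d.wl, d.ul⟩

/-- Doubling with trivial multiplier. -/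
theorem kl_doubling1 {n : ℕ} {H : En n → En n → ℝ}
    (hHc : Continuous fun q : En n × En n => H q.1 q.2) (hHco : Coercive H)
    {U W cU cW : En n × ℝ → ℝ} {v : En n → ℝ}
    {Θ Θ₁ Θ₂ : ℝ → ℝ → ℝ} (hΘ : KlC1 Θ Θ₁ Θ₂)
    {S : Set (ℝ × ℝ)} (hScomp : IsCompact S)
    (hS0 : ∀ q ∈ S, 0 ≤ q.1 ∧ 0 ≤ q.2)
    (hv : SingleSub H v 0) (hvc : Continuous v) (hvp : ZPeriodic v)
    (hU : KlSup H cU U) (hW : KlSub H cW W) (hUp : ZPeriodicST U) (hWp : ZPeriodicST W)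
    (hUc : ContinuousOn U {q : En n × ℝ | 0 ≤ q.2}) (hWc : ContinuousOn W {q : En n × ℝ | 0 ≤ q.2})
    (hcUc : ContinuousOn cU {q : En n × ℝ | 0 ≤ q.2})
    (hcWc : ContinuousOn cW {q : En n × ℝ | 0 ≤ q.2})
    (hneg : ∃ x t r, (t, r) ∈ S ∧ U (x, t) - W (x, r) + Θ t r < 0)
    (hbd : ∀ x t r, (t, r) ∈ S → U (x, t) - W (x, r) + Θ t r < 0 → S ∈ 𝓝 (t, r)) :
    ∃ (x : En n) (t r : ℝ) (P : En n), x ∈ klCube n ∧ (t, r) ∈ S ∧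
      U (x, t) - W (x, r) + Θ t r < 0 ∧
      (∀ x' t' r', (t', r') ∈ S → U (x, t) - W (x, r) + Θ t r ≤ U (x', t') - W (x', r') + Θ t' r') ∧
      cU (x, t) ≤ - Θ₁ t r + H x P ∧ Θ₂ t r + H x P ≤ cW (x, r) := by
  have hμ : KlC1 (fun _ _ => 1) (fun _ _ => 0) (fun _ _ => 0) :=
    ⟨continuous_const, continuous_const, continuous_const, fun t r => hasDerivAt_const _ _,
      fun t r => hasDerivAt_const _ _⟩
  obtain ⟨x, t, r, P, Q, R, h1, h2, h3, h4, h5, h6, h7, h8⟩ :=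
    kl_doubling hHc hHco hμ hΘ (fun _ _ => one_pos) hScomp hS0 (fun _ _ => le_rfl) hv hvc hvp hU hW
      hUp hWp hUc hWc hcUc hcWc (fun x t r => U (x, t) - W (x, r) + Θ t r)
      (fun x t r => by ring) hneg hbd
  simp only [one_smul, sub_self, zero_smul, add_zero] at h5
  subst h5
  exact ⟨x, t, r, P, h1, h2, h3, h4, by linarith, by simpa using h8⟩

/-- Contact for the system: the contact component has the smaller value. -/
theorem kl_sys {n : ℕ} {H : En n → En n → ℝ} {v : En n → ℝ} {C : ℝ} {u w : En n × ℝ → ℝ}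
    (d : KlD H v C u w)
    {μ μ₁ μ₂ Θ Θ₁ Θ₂ : ℝ → ℝ → ℝ} (hμ : KlC1 μ μ₁ μ₂) (hΘ : KlC1 Θ Θ₁ Θ₂)
    (hμpos : ∀ t r, 0 < μ t r) {S : Set (ℝ × ℝ)} (hScomp : IsCompact S)
    (hS0 : ∀ q ∈ S, 0 ≤ q.1 ∧ 0 ≤ q.2) (hμ1 : ∀ q ∈ S, μ q.1 q.2 ≤ 1)
    (Φ : (En n × ℝ → ℝ) → En n → ℝ → ℝ → ℝ)
    (hΦ : ∀ a x t r, Φ a x t r = a (x, t) - μ t r * a (x, r) - (1 - μ t r) * v x + Θ t r)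
    (hneg : ∃ x t r, (t, r) ∈ S ∧ Φ u x t r < 0)
    (hbu : ∀ x t r, (t, r) ∈ S → Φ u x t r < 0 → S ∈ 𝓝 (t, r))
    (hbw : ∀ x t r, (t, r) ∈ S → Φ w x t r < 0 → S ∈ 𝓝 (t, r)) :
    ∃ a b, KlD H v C a b ∧ ((a = u ∧ b = w) ∨ (a = w ∧ b = u)) ∧
      ∃ (x : En n) (t r : ℝ) (P Q R : En n), (t, r) ∈ S ∧ Φ a x t r < 0 ∧
      Φ a x t r ≤ Φ b x t r ∧
      P = μ t r • Q + (1 - μ t r) • R ∧ (μ t r < 1 → H x R ≤ 0) ∧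
      b (x, t) - a (x, t) ≤ μ₁ t r * (a (x, r) - v x) - Θ₁ t r + H x P ∧
      (Θ₂ t r - μ₂ t r * (a (x, r) - v x)) / μ t r + H x Q ≤ b (x, r) - a (x, r) := by
  obtain ⟨x, t, r, P, Q, R, h1, h2, h3, h4, h5, h6, h7, h8⟩ :=
    kl_doubling d.hc d.hco hμ hΘ hμpos hScomp hS0 hμ1 d.vs d.vc d.vp d.usup d.usub
      d.up d.up d.uc d.uc (d.wc.sub d.uc) (d.wc.sub d.uc) (Φ u) (hΦ u) hneg hbu
  by_cases hle : Φ u x t r ≤ Φ w x t r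
  · exact ⟨u, w, d, Or.inl ⟨rfl, rfl⟩, x, t, r, P, Q, R, h2, h3, hle, h5, h6, h7, h8⟩
  push Not at hle
  obtain ⟨x', t', r', P', Q', R', k1, k2, k3, k4, k5, k6, k7, k8⟩ :=
    kl_doubling d.hc d.hco hμ hΘ hμpos hScomp hS0 hμ1 d.vs d.vc d.vp d.wsup d.wsub
      d.wp d.wp d.wc d.wc (d.uc.sub d.wc) (d.uc.sub d.wc) (Φ w) (hΦ w)
      ⟨x, t, r, h2, hle.trans h3⟩ hbw
  refine ⟨w, u, d.symm, Or.inr ⟨rfl, rfl⟩, x', t', r', P', Q', R', k2, k3, ?_, k5, k6, k7, k8⟩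
  have e1 := k4 x t r h2
  have e2 := h4 x' t' r' k2
  linarith

theorem kl_H_bound {n : ℕ} {H : En n → En n → ℝ}
    (hc : Continuous fun q : En n × En n => H q.1 q.2) (hper : ZPeriodicH H) (L : ℝ) :
    ∃ K : ℝ, 0 ≤ K ∧ ∀ x p : En n, ‖p‖ ≤ L → H x p ≤ K := by
  obtain ⟨K, hK⟩ := ((klCube_compact n).prod (isCompact_closedBall (0 : En n) L)).bddAbove_image
    hc.continuousOn
  refine ⟨max K 0, le_max_right _ _, fun x p hp => le_max_of_le_left ?_⟩
  obtain ⟨k, hk⟩ := klCube_shift x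
  rw [← hper x k p]
  exact hK ⟨(x + intVec n k, p), ⟨hk, by simpa using hp⟩, rfl⟩

theorem kl_time_zero {n : ℕ} (φ : En n × ℝ → ℝ) (hφ : ContDiff ℝ 1 φ) (x : En n) (t : ℝ)
    (h : IsLocalMin (fun s => φ (x, s)) t ∨ IsLocalMax (fun s => φ (x, s)) t) :
    fderiv ℝ φ (x, t) (0, 1) = 0 := by
  have h1 : HasFDerivAt φ (fderiv ℝ φ (x, t)) (x, t) :=
    (hφ.differentiable one_ne_zero).differentiableAt.hasFDerivAt
  have h2 : HasDerivAt (fun s : ℝ => ((x, s) : En n × ℝ)) (0, 1) t :=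
    (hasDerivAt_const t x).prodMk (hasDerivAt_id t)
  have h3 := h1.comp_hasDerivAt t h2
  rcases h with h | h
  · exact h.hasDerivAt_eq_zero h3
  · exact h.hasDerivAt_eq_zero h3

theorem kl_grad_bound {n : ℕ} (φ : En n → ℝ) (p x : En n) (L : ℝ) (hL : 0 ≤ L)
    (hφ : HasGradientAt φ p x)
    (h : ∀ᶠ y in 𝓝 x, φ x - L * ‖y - x‖ ≤ φ y) : ‖p‖ ≤ L := by
  by_cases hp : p = 0
  · simpa [hp] using hL
  have hpos : 0 < ‖p‖ := norm_pos_iff.2 hp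
  have h1 : HasDerivAt (fun s : ℝ => x + s • (-p)) (-p) 0 := by
    simpa using ((hasDerivAt_id (0 : ℝ)).smul_const (-p)).const_add x
  have h2 : HasFDerivAt φ (InnerProductSpace.toDual ℝ (En n) p) (x + (0 : ℝ) • (-p)) := by
    simpa using hφ.hasFDerivAt
  have h3 := h2.comp_hasDerivAt 0 h1
  have h4 := (hasDerivAt_iff_tendsto_slope_zero.1 h3).mono_left
    (nhdsWithin_mono 0 (show Ioi (0 : ℝ) ⊆ {0}ᶜ from fun s hs => ne_of_gt hs))
  have h5 : ∀ᶠ s : ℝ in 𝓝[>] 0, -(L * ‖p‖) ≤ s⁻¹ • ((φ ∘ fun s : ℝ => x + s • (-p)) (0 + s) -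
      (φ ∘ fun s : ℝ => x + s • (-p)) 0) := by
    have hc : Tendsto (fun s : ℝ => x + s • (-p)) (𝓝[>] 0) (𝓝 x) := by
      have := (by fun_prop : Continuous (fun s : ℝ => x + s • (-p))).tendsto 0
      simp only [zero_smul, add_zero] at this
      exact this.mono_left nhdsWithin_le_nhds
    filter_upwards [hc.eventually h, self_mem_nhdsWithin] with s hs hs0
    have hs0 : 0 < s := hs0
    simp only [add_sub_cancel_left, norm_smul, norm_neg, Real.norm_eq_abs, abs_of_pos hs0] at hs
    simp only [Function.comp, zero_add, zero_smul, add_zero, smul_eq_mul]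
    rw [inv_mul_eq_div, le_div_iff₀ hs0]
    linarith
  have h6 := ge_of_tendsto h4 h5
  simp only [map_neg, InnerProductSpace.toDual_apply_apply, real_inner_self_eq_norm_sq] at h6
  nlinarith

theorem kl_static_sub {n : ℕ} {H : En n → En n → ℝ} (g : En n → ℝ) (L : NNReal)
    (hg : LipschitzWith L g) (K : ℝ) (hK : ∀ x p : En n, ‖p‖ ≤ L → H x p ≤ K) :
    KlSub H (fun _ => K) (fun q => g q.1) := by
  intro φ hφ x t ht hmax
  have h1 : IsLocalMin (fun s => φ (x, s)) t := by
    have hc : Tendsto (fun s : ℝ => ((x, s) : En n × ℝ)) (𝓝 t) (𝓝 (x, t)) :=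
      (by fun_prop : Continuous fun s : ℝ => ((x, s) : En n × ℝ)).tendsto t
    filter_upwards [hc.eventually hmax] with s hs
    linarith
  rw [kl_time_zero φ hφ x t (Or.inl h1), zero_add]
  apply hK
  have hd : DifferentiableAt ℝ (fun y => φ (y, t)) x := by
    have := (hφ.differentiable one_ne_zero)
    fun_prop
  refine kl_grad_bound (fun y => φ (y, t)) _ x L L.2 hd.hasGradientAt ?_
  have hc : Tendsto (fun y : En n => ((y, t) : En n × ℝ)) (𝓝 x) (𝓝 (x, t)) :=
    (by fun_prop : Continuous fun y : En n => ((y, t) : En n × ℝ)).tendsto x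
  filter_upwards [hc.eventually hmax] with y hy
  have h2 := hg.dist_le_mul y x
  rw [Real.dist_eq, dist_eq_norm] at h2
  have := (abs_le.1 h2).1
  linarith

theorem kl_static_sup {n : ℕ} {H : En n → En n → ℝ} (g : En n → ℝ)
    (hK : ∀ x p : En n, 0 ≤ H x p) :
    KlSup H (fun _ => 0) (fun q => g q.1) := by
  intro φ hφ x t ht hmin
  have h1 : IsLocalMax (fun s => φ (x, s)) t := by
    have hc : Tendsto (fun s : ℝ => ((x, s) : En n × ℝ)) (𝓝 t) (𝓝 (x, t)) :=
      (by fun_prop : Continuous fun s : ℝ => ((x, s) : En n × ℝ)).tendsto t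
    filter_upwards [hc.eventually hmin] with s hs
    linarith
  rw [kl_time_zero φ hφ x t (Or.inr h1), zero_add]
  exact hK _ _

section KlSteps

variable {n : ℕ} {H : En n → En n → ℝ} {v : En n → ℝ} {C : ℝ} {u w : En n × ℝ → ℝ}

theorem KlD.one_le (d : KlD H v C u w) : 1 ≤ C := by
  have := d.bu 0 0 le_rfl
  linarith

theorem kl_box_nhds {a b c e t r : ℝ} (h1 : a < t) (h2 : t < b) (h3 : c < r) (h4 : r < e) :
    Icc a b ×ˢ Icc c e ∈ 𝓝 (t, r) :=
  prod_mem_nhds (Icc_mem_nhds h1 h2) (Icc_mem_nhds h3 h4)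

def klTri (a b : ℝ) : Set (ℝ × ℝ) := {q | a ≤ q.2 ∧ q.2 ≤ q.1 ∧ q.1 ≤ b}

theorem klTri_compact (a b : ℝ) : IsCompact (klTri a b) := by
  refine ((isCompact_Icc (a := a) (b := b)).prod (isCompact_Icc (a := a) (b := b))).of_isClosed_subset
    ?_ ?_
  · exact (isClosed_le continuous_const continuous_snd).inter
      ((isClosed_le continuous_snd continuous_fst).inter
        (isClosed_le continuous_fst continuous_const))
  · rintro ⟨t, r⟩ ⟨h1, h2, h3⟩
    simp only at h1 h2 h3
    exact ⟨⟨by simp only; linarith, h3⟩, ⟨h1, by simp only; linarith⟩⟩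

theorem klTri_nhds {a b t r : ℝ} (h1 : a < r) (h2 : r < t) (h3 : t < b) : klTri a b ∈ 𝓝 (t, r) := by
  have o : IsOpen {q : ℝ × ℝ | a < q.2 ∧ q.2 < q.1 ∧ q.1 < b} :=
    (isOpen_lt continuous_const continuous_snd).inter
      ((isOpen_lt continuous_snd continuous_fst).inter
        (isOpen_lt continuous_fst continuous_const))
  refine mem_of_superset (o.mem_nhds ⟨h1, h2, h3⟩) ?_
  rintro q ⟨k1, k2, k3⟩
  exact ⟨k1.le, k2.le, k3.le⟩

theorem KlD.stepB (d : KlD H v C u w) :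
    ∃ K : ℝ, 0 ≤ K ∧ ∀ x t, 0 ≤ t → u (x, 0) - K * t ≤ u (x, t) := by
  obtain ⟨L, hL⟩ := d.ul
  obtain ⟨K₁, hK₁, hb⟩ := kl_H_bound d.hc d.hper (L : ℝ)
  have hC := d.one_le
  set K := C + K₁ + 1 with hKdef
  have hKC : C ≤ K := by linarith
  have hK0 : 0 < K := by linarith
  refine ⟨K, by linarith, ?_⟩
  by_contra hcon
  push Not at hcon
  obtain ⟨x₀, t₀, ht₀, hlt⟩ := hcon
  have hbb : ∀ x t, 0 ≤ t → - C < u (x, t) - u (x, 0) := by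
    intro x t ht
    have h1 := d.bu x t ht
    have h2 := d.bu x 0 le_rfl
    linarith
  have hΘ : KlC1 (fun t r => K * t + C * (r - 1) ^ 2) (fun _ _ => K) (fun _ r => C * (2 * (r - 1))) := by
    refine ⟨by fun_prop, by fun_prop, by fun_prop, fun t r => ?_, fun t r => ?_⟩
    · simpa using ((hasDerivAt_id t).const_mul K).add_const (C * (r - 1) ^ 2)
    · have := ((((hasDerivAt_id r).sub_const 1).pow 2).const_mul C).const_add (K * t)
      refine this.congr_deriv ?_
      simp
  obtain ⟨x, t, r, P, h1, h2, h3, h4, h5, h6⟩ := kl_doubling1 d.hc d.hco hΘ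
    (S := Icc 0 1 ×ˢ Icc 0 2) (isCompact_Icc.prod isCompact_Icc)
    (fun q hq => ⟨hq.1.1, hq.2.1⟩) d.vs d.vc d.vp d.usup
    (kl_static_sub (fun x => u (x, 0)) L hL K₁ hb) d.up (fun x k t => d.up x k 0) d.uc
    (by
      have : Continuous fun q : En n × ℝ => (fun x => u (x, 0)) q.1 := hL.continuous.comp continuous_fst
      exact this.continuousOn)
    (d.wc.sub d.uc) continuousOn_const
    (by
      refine ⟨x₀, t₀, 1, ⟨⟨ht₀, ?_⟩, by simp⟩, ?_⟩
      · simp only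
        by_contra hc
        push Not at hc
        have := hbb x₀ t₀ ht₀
        nlinarith
      · simp only
        linarith)
    (by
      rintro x t r ⟨⟨a1, a2⟩, ⟨a3, a4⟩⟩ hn
      simp only at a1 a2 a3 a4 hn
      have hq := hbb x t a1
      have hsq : 0 ≤ C * (r - 1) ^ 2 := by positivity
      have hkt : 0 ≤ K * t := by positivity
      refine kl_box_nhds (lt_of_le_of_ne a1 ?_) (lt_of_le_of_ne a2 ?_) (lt_of_le_of_ne a3 ?_)
        (lt_of_le_of_ne a4 ?_)
      · rintro rfl
        linarith
      · rintro rfl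
        linarith
      · rintro rfl
        linarith
      · rintro rfl
        linarith)
  obtain ⟨⟨a1, a2⟩, ⟨a3, a4⟩⟩ := h2
  simp only at a1 a2 a3 a4 h3 h5 h6
  have hr := h4 x t 1 ⟨⟨a1, a2⟩, by simp⟩
  simp only at hr
  have hr2 : (r - 1) ^ 2 ≤ 0 := by nlinarith
  have hr3 : r - 1 = 0 := by
    have : (r - 1) ^ 2 = 0 := le_antisymm hr2 (sq_nonneg _)
    exact pow_eq_zero_iff (two_ne_zero) |>.1 this
  rw [hr3] at h6
  have e1 := d.bu x t a1
  have e2 := d.bw x t a1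
  linarith

theorem KlD.step1 (d : KlD H v C u w) :
    ∃ K : ℝ, 0 ≤ K ∧ (∀ x r t, 0 ≤ r → r ≤ t → u (x, r) - K * (t - r) ≤ u (x, t)) ∧
      (∀ x r t, 0 ≤ r → r ≤ t → w (x, r) - K * (t - r) ≤ w (x, t)) := by
  obtain ⟨Ku, hKu, hu⟩ := d.stepB
  obtain ⟨Kw, hKw, hw⟩ := d.symm.stepB
  have hC := d.one_le
  set K := max Ku Kw with hK
  have hK0 : 0 ≤ K := le_max_of_le_left hKu
  have hu' : ∀ x t, 0 ≤ t → u (x, 0) - K * t ≤ u (x, t) := fun x t ht =>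
    (by have := mul_le_mul_of_nonneg_right (le_max_left Ku Kw) ht; linarith [hu x t ht])
  have hw' : ∀ x t, 0 ≤ t → w (x, 0) - K * t ≤ w (x, t) := fun x t ht =>
    (by have := mul_le_mul_of_nonneg_right (le_max_right Ku Kw) ht; linarith [hw x t ht])
  -- core argument
  have core : ∀ a b : En n × ℝ → ℝ, KlD H v C a b →
      (∀ x t, 0 ≤ t → a (x, 0) - K * t ≤ a (x, t)) → (∀ x t, 0 ≤ t → b (x, 0) - K * t ≤ b (x, t)) →
      ∀ x r t, 0 ≤ r → r ≤ t → a (x, r) - K * (t - r) ≤ a (x, t) := by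
    clear hu hw hu' hw' d
    intro u w d hu hw x₀ r₀ t₀ hr₀ hrt₀
    suffices h : ∀ ζ : ℝ, 0 < ζ → 0 ≤ u (x₀, t₀) - u (x₀, r₀) + (K * (t₀ - r₀) + ζ * t₀) by
      refine le_of_forall_pos_le_add fun ε hε => ?_
      have h1 := h (ε / (t₀ + 1)) (by have : 0 ≤ t₀ := hr₀.trans hrt₀; positivity)
      have h2 : ε / (t₀ + 1) * t₀ ≤ ε := by
        have : 0 ≤ t₀ := hr₀.trans hrt₀
        rw [div_mul_eq_mul_div, div_le_iff₀ (by linarith)]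
        nlinarith
      linarith
    intro ζ hζ
    by_contra hneg
    push Not at hneg
    have hμ : KlC1 (fun _ _ => 1) (fun _ _ => 0) (fun _ _ => 0) :=
      ⟨continuous_const, continuous_const, continuous_const, fun t r => hasDerivAt_const _ _,
        fun t r => hasDerivAt_const _ _⟩
    have hΘ : KlC1 (fun t r => K * (t - r) + ζ * t) (fun _ _ => K + ζ) (fun _ _ => -K) := by
      refine ⟨by fun_prop, by fun_prop, by fun_prop, fun t r => ?_, fun t r => ?_⟩
      · have := (((hasDerivAt_id t).sub_const r).const_mul K).add ((hasDerivAt_id t).const_mul ζ)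
        refine this.congr_deriv ?_
        simp
      · simpa using (((hasDerivAt_id r).const_sub t).const_mul K).add_const (ζ * t)
    have hbdd : ∀ a : En n × ℝ → ℝ, (∀ x t, 0 ≤ t → 1 ≤ a (x, t) - v x ∧ a (x, t) - v x ≤ C) →
        (∀ x t, 0 ≤ t → a (x, 0) - K * t ≤ a (x, t)) →
        ∀ x t r, (t, r) ∈ klTri 0 (C / ζ) → a (x, t) - a (x, r) + (K * (t - r) + ζ * t) < 0 →
        klTri 0 (C / ζ) ∈ 𝓝 (t, r) := by
      rintro a hab ha x t r ⟨a1, a2, a3⟩ hn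
      simp only at a1 a2 a3
      have h1 := hab x r a1
      have h2 := hab x t (a1.trans a2)
      have h3 : 0 ≤ K * (t - r) := mul_nonneg hK0 (by linarith)
      have h4 : 0 ≤ ζ * t := mul_nonneg hζ.le (a1.trans a2)
      refine klTri_nhds (lt_of_le_of_ne a1 ?_) (lt_of_le_of_ne a2 ?_) (lt_of_le_of_ne a3 ?_)
      · rintro rfl
        have := ha x t a2
        linarith
      · rintro rfl
        linarith
      · rintro rfl
        have : ζ * (C / ζ) = C := by field_simp
        linarith
    obtain ⟨a, b, dab, -, x, t, r, P, Q, R, h1, h2, h3, h4, h5, h6, h7⟩ :=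
      kl_sys d hμ hΘ (fun _ _ => one_pos) (klTri_compact 0 (C / ζ))
        (fun q hq => ⟨hq.1.trans hq.2.1, hq.1⟩) (fun _ _ => le_rfl)
        (fun a x t r => a (x, t) - a (x, r) + (K * (t - r) + ζ * t))
        (fun a x t r => by ring)
        (by
          refine ⟨x₀, t₀, r₀, ⟨hr₀, hrt₀, ?_⟩, hneg⟩
          simp only
          by_contra hc
          push Not at hc
          rw [div_lt_iff₀ hζ] at hc
          have e1 := d.bu x₀ r₀ hr₀
          have e2 := d.bu x₀ t₀ (hr₀.trans hrt₀)
          have h3 : 0 ≤ K * (t₀ - r₀) := mul_nonneg hK0 (by linarith)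
          linarith)
        (hbdd u d.bu hu) (hbdd w d.bw hw)
    simp only [one_smul, sub_self, zero_smul, add_zero] at h4
    subst h4
    simp only [zero_mul, sub_zero, div_one] at h6 h7 h3
    linarith
  exact ⟨K, hK0, core u w d hu' hw', core w u d.symm hw' hu'⟩

theorem KlD.step2a (d : KlD H v C u w) (ε : ℝ) (hε : 0 < ε) (x₀ : En n) (t₀ : ℝ) (ht₀ : 0 ≤ t₀) :
    u (x₀, t₀) - w (x₀, t₀) ≤ 2 * C * Real.exp (-t₀) + ε * (1 + t₀) := by
  have hC := d.one_le
  by_contra hcon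
  push Not at hcon
  have hbb : ∀ x t r, 0 ≤ t → 0 ≤ r → - C < w (x, t) - u (x, r) := by
    intro x t r ht hr
    have h1 := d.bw x t ht
    have h2 := d.bu x r hr
    linarith
  set M := C / ε + 2 with hM
  have hεM : ε * M = C + 2 * ε := by rw [hM]; field_simp
  have hMpos : 0 < M := by positivity
  have hseq : ∀ N : ℕ, ∃ p : En n × (ℝ × ℝ), p ∈ klCube n ×ˢ (Icc 0 M ×ˢ Icc 0 M) ∧
      w (p.1, p.2.1) - u (p.1, p.2.2) + (2 * C * Real.exp (-p.2.2) + ε * (1 + p.2.2)) ≤ 0 ∧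
      (p.2.1 - p.2.2) ^ 2 ≤ C / ((N : ℝ) + 1) ∧
      (u (p.1, p.2.1) - w (p.1, p.2.1)) + (- (2 * C * Real.exp (-p.2.2)) + ε) ≤
        w (p.1, p.2.2) - u (p.1, p.2.2) := by
    intro N
    set K : ℝ := (N : ℝ) + 1 + 4 * C with hK
    have hN : (0 : ℝ) < (N : ℝ) + 1 := by positivity
    have hΘ : KlC1 (fun t r => K * (t - r) ^ 2 + (2 * C * Real.exp (-r) + ε * (1 + r)))
        (fun t r => K * (2 * (t - r)))
        (fun t r => - (K * (2 * (t - r))) + (- (2 * C * Real.exp (-r)) + ε)) := by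
      refine ⟨by fun_prop, by fun_prop, by fun_prop, fun t r => ?_, fun t r => ?_⟩
      · have := ((((hasDerivAt_id t).sub_const r).pow 2).const_mul K).add_const
          (2 * C * Real.exp (-r) + ε * (1 + r))
        refine this.congr_deriv ?_
        simp
      · have := ((((hasDerivAt_id r).const_sub t).pow 2).const_mul K).add
          (((hasDerivAt_id r).neg.exp.const_mul (2 * C)).add
            (((hasDerivAt_id r).const_add 1).const_mul ε))
        refine this.congr_deriv ?_
        simp
    obtain ⟨x, t, r, P, h1, h2, h3, h4, h5, h6⟩ := kl_doubling1 d.hc d.hco hΘ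
      (S := Icc 0 M ×ˢ Icc 0 M) (isCompact_Icc.prod isCompact_Icc)
      (fun q hq => ⟨hq.1.1, hq.2.1⟩) d.vs d.vc d.vp d.wsup d.usub d.wp d.up d.wc d.uc
      (d.uc.sub d.wc) (d.wc.sub d.uc)
      (by
        have hM' : t₀ ≤ M := by
          by_contra hc
          push Not at hc
          have e1 := hbb x₀ t₀ t₀ ht₀ ht₀
          have e2 := mul_lt_mul_of_pos_left hc hε
          have e3 : 0 < 2 * C * Real.exp (-t₀) := by positivity
          linarith
        refine ⟨x₀, t₀, t₀, ⟨⟨ht₀, hM'⟩, ⟨ht₀, hM'⟩⟩, ?_⟩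
        simp only [sub_self]
        linarith)
      (by
        rintro x t r ⟨⟨a1, a2⟩, ⟨a3, a4⟩⟩ hn
        simp only at a1 a2 a3 a4 hn
        have hq := hbb x t r a1 a3
        have hsq : 0 ≤ K * (t - r) ^ 2 := by positivity
        have he : 0 < 2 * C * Real.exp (-r) := by positivity
        have her : 0 ≤ ε * r := by positivity
        have hsq2 : 4 * C * (t - r) ^ 2 ≤ K * (t - r) ^ 2 :=
          mul_le_mul_of_nonneg_right (by linarith) (sq_nonneg _)
        refine kl_box_nhds (lt_of_le_of_ne a1 ?_) (lt_of_le_of_ne a2 ?_) (lt_of_le_of_ne a3 ?_)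
          (lt_of_le_of_ne a4 ?_)
        · rintro rfl
          have e1 := Real.add_one_le_exp (-r)
          by_cases hr : r ≤ 1 / 2
          · nlinarith
          · push Not at hr
            have e2 : 1 / 4 ≤ (0 - r) ^ 2 := by nlinarith
            have e3 : 4 * C * (1 / 4) ≤ 4 * C * (0 - r) ^ 2 :=
              mul_le_mul_of_nonneg_left e2 (by linarith)
            linarith
        · rintro rfl
          by_cases hr : M - r ≤ 1 / 2
          · nlinarith
          · push Not at hr
            have e2 : 1 / 4 ≤ (M - r) ^ 2 := by nlinarith
            have e3 : 4 * C * (1 / 4) ≤ 4 * C * (M - r) ^ 2 :=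
              mul_le_mul_of_nonneg_left e2 (by linarith)
            linarith
        · rintro rfl
          simp only [neg_zero, Real.exp_zero] at hn
          linarith
        · rintro rfl
          linarith)
    obtain ⟨⟨a1, a2⟩, ⟨a3, a4⟩⟩ := h2
    simp only at a1 a2 a3 a4 h3 h5 h6
    have hq := hbb x t r a1 a3
    have he : 0 < 2 * C * Real.exp (-r) := by positivity
    have her : 0 ≤ ε * r := by positivity
    have hsq : 0 ≤ K * (t - r) ^ 2 := by positivity
    refine ⟨(x, t, r), ⟨h1, ⟨a1, a2⟩, ⟨a3, a4⟩⟩, ?_, ?_, ?_⟩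
    · simp only; linarith
    · simp only
      rw [le_div_iff₀ hN]
      nlinarith [sq_nonneg (t - r)]
    · simp only; linarith
  choose p hpK hp1 hp2 hp3 using hseq
  obtain ⟨⟨ξ, t, r⟩, hqK, hq⟩ := kl_ultra
    ((klCube_compact n).prod (isCompact_Icc.prod isCompact_Icc)) p (Eventually.of_forall hpK)
  have lx : Tendsto (fun N => (p N).1) (hyperfilter ℕ : Filter ℕ) (𝓝 ξ) :=
    (continuous_fst.tendsto _).comp hq
  have lt : Tendsto (fun N => (p N).2.1) (hyperfilter ℕ : Filter ℕ) (𝓝 t) :=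
    ((by fun_prop : Continuous fun y : En n × (ℝ × ℝ) => y.2.1).tendsto (ξ, t, r)).comp hq
  have lr : Tendsto (fun N => (p N).2.2) (hyperfilter ℕ : Filter ℕ) (𝓝 r) :=
    ((by fun_prop : Continuous fun y : En n × (ℝ × ℝ) => y.2.2).tendsto (ξ, t, r)).comp hq
  have htr : (t - r) ^ 2 ≤ 0 :=
    le_of_tendsto_of_tendsto ((lt.sub lr).pow 2) (kl_inv_tendsto C) (Eventually.of_forall hp2)
  have htr' : t = r := by
    have : (t - r) ^ 2 = 0 := le_antisymm htr (sq_nonneg _)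
    have := pow_eq_zero_iff (two_ne_zero) |>.1 this
    linarith
  subst htr'
  have ht0 : 0 ≤ t := hqK.2.1.1
  have limc : ∀ (g : En n × ℝ → ℝ) (s : ℕ → ℝ),
      ContinuousOn g {q : En n × ℝ | 0 ≤ q.2} →
      Tendsto s (hyperfilter ℕ : Filter ℕ) (𝓝 t) →
      (∀ N, 0 ≤ s N) →
      Tendsto (fun N => g ((p N).1, s N)) (hyperfilter ℕ : Filter ℕ) (𝓝 (g (ξ, t))) := by
    intro g s hg hs h0
    have h1 := (hg (ξ, t) ht0).tendsto
    exact h1.comp (tendsto_nhdsWithin_iff.2 ⟨lx.prodMk_nhds hs, Eventually.of_forall h0⟩)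
  have le : Tendsto (fun N => 2 * C * Real.exp (-(p N).2.2)) (hyperfilter ℕ : Filter ℕ)
      (𝓝 (2 * C * Real.exp (-t))) :=
    ((by fun_prop : Continuous fun s : ℝ => 2 * C * Real.exp (-s)).tendsto t).comp lr
  have n1 : ∀ N, 0 ≤ (p N).2.1 := fun N => (hpK N).2.1.1
  have n2 : ∀ N, 0 ≤ (p N).2.2 := fun N => (hpK N).2.2.1
  have lu1 := limc u _ d.uc lt n1
  have lu2 := limc u _ d.uc lr n2
  have lw1 := limc w _ d.wc lt n1
  have lw2 := limc w _ d.wc lr n2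
  have f1 := le_of_tendsto ((lw1.sub lu2).add (le.add ((lr.const_add 1).const_mul ε)))
    (Eventually.of_forall hp1)
  have f2 := le_of_tendsto_of_tendsto ((lu1.sub lw1).add (le.neg.add_const ε)) (lw2.sub lu2)
    (Eventually.of_forall hp3)
  have he : 0 < 2 * C * Real.exp (-t) := by positivity
  have her : 0 ≤ ε * t := by positivity
  linarith

theorem KlD.step2 (d : KlD H v C u w) (δ : ℝ) (hδ : 0 < δ) :
    ∃ T : ℝ, 0 ≤ T ∧ ∀ x t, T ≤ t → u (x, t) - w (x, t) ≤ δ ∧ w (x, t) - u (x, t) ≤ δ := by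
  have core : ∀ a b : En n × ℝ → ℝ, KlD H v C a b → ∀ x t, 0 ≤ t →
      a (x, t) - b (x, t) ≤ 2 * C * Real.exp (-t) := by
    intro a b d' x t ht
    refine le_of_forall_pos_le_add fun ε hε => ?_
    have h1 := d'.step2a (ε / (1 + t)) (by positivity) x t ht
    have h2 : ε / (1 + t) * (1 + t) = ε := by field_simp
    linarith
  have hlim : Tendsto (fun t : ℝ => 2 * C * Real.exp (-t)) atTop (𝓝 0) := by
    simpa using (Real.tendsto_exp_neg_atTop_nhds_zero).const_mul (2 * C)
  obtain ⟨T, hT⟩ := eventually_atTop.1 (hlim.eventually_le_const hδ)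
  refine ⟨max T 0, le_max_right _ _, fun x t ht => ?_⟩
  have h0 : 0 ≤ t := (le_max_right _ _).trans ht
  have h1 := hT t ((le_max_left _ _).trans ht)
  exact ⟨(core u w d x t h0).trans h1, (core w u d.symm x t h0).trans h1⟩

end KlSteps

section KlSteps2

variable {n : ℕ} {H : En n → En n → ℝ} {v : En n → ℝ} {C : ℝ} {u w : En n × ℝ → ℝ}

theorem KlD.step3a (d : KlD H v C u w) {η ψ T K ζ : ℝ} (hη : 0 < η) (hψ : 0 < ψ)
    (hA : A8plusAt H (η / 4) ψ) (hT : 0 ≤ T)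
    (hclose : ∀ x t, T ≤ t → u (x, t) - w (x, t) ≤ η / 4 ∧ w (x, t) - u (x, t) ≤ η / 4)
    (hK0 : 0 ≤ K) (hKu : ∀ x r t, 0 ≤ r → r ≤ t → u (x, r) - K * (t - r) ≤ u (x, t))
    (hKw : ∀ x r t, 0 ≤ r → r ≤ t → w (x, r) - K * (t - r) ≤ w (x, t)) (hζ : 0 < ζ)
    (x₀ : En n) (r₀ t₀ : ℝ) (hr₀ : T ≤ r₀) (hrt₀ : r₀ ≤ t₀) :
    Real.exp (-((K + 1) * C * Real.exp (-(ψ / (2 * C) * (r₀ - T))) * (t₀ - r₀)))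
      * (u (x₀, r₀) - v x₀) ≤ u (x₀, t₀) - v x₀ + (η / 2 * (t₀ - r₀) + ζ * t₀) := by
  have hC := d.one_le
  set κ := ψ / (2 * C) with hκ
  have hκ0 : 0 < κ := by positivity
  have hκC : κ * C = ψ / 2 := by rw [hκ]; field_simp
  set k : ℝ → ℝ := fun r => (K + 1) * C * Real.exp (-(κ * (r - T))) with hk
  have hkpos : ∀ r, 0 < k r := fun r => by simp only [hk]; positivity
  have hkc : Continuous k := by simp only [hk]; fun_prop
  have hkd : ∀ r, HasDerivAt k (-(κ * k r)) r := by
    intro r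
    have := ((((hasDerivAt_id r).sub_const T).const_mul κ).neg.exp).const_mul ((K + 1) * C)
    refine this.congr_deriv ?_
    simp only [hk, id, Pi.neg_apply]
    ring
  have hkT : k T = (K + 1) * C := by simp [hk]
  set μ : ℝ → ℝ → ℝ := fun t r => Real.exp (-(k r * (t - r))) with hμdef
  have hμpos : ∀ t r, 0 < μ t r := fun t r => Real.exp_pos _
  have hμ : KlC1 μ (fun t r => -(k r * μ t r))
      (fun t r => (k r + κ * k r * (t - r)) * μ t r) := by
    have hc : Continuous (fun q : ℝ × ℝ => μ q.1 q.2) := by simp only [hμdef]; fun_prop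
    have hck : Continuous (fun q : ℝ × ℝ => k q.2) := by fun_prop
    refine ⟨hc, (hck.mul hc).neg, by fun_prop, fun t r => ?_, fun t r => ?_⟩
    · have := (((hasDerivAt_id t).sub_const r).const_mul (k r)).neg.exp
      refine this.congr_deriv ?_
      simp only [hμdef, id, Pi.neg_apply]
      ring
    · have := ((hkd r).mul ((hasDerivAt_id r).const_sub t)).neg.exp
      refine this.congr_deriv ?_
      simp only [hμdef, id, Pi.mul_apply, Pi.neg_apply]
      ring
  have hΘ : KlC1 (fun t r => η / 2 * (t - r) + ζ * t) (fun _ _ => η / 2 + ζ)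
      (fun _ _ => -(η / 2)) := by
    refine ⟨by fun_prop, by fun_prop, by fun_prop, fun t r => ?_, fun t r => ?_⟩
    · have := (((hasDerivAt_id t).sub_const r).const_mul (η / 2)).add
        ((hasDerivAt_id t).const_mul ζ)
      refine this.congr_deriv ?_
      simp
    · have := (((hasDerivAt_id r).const_sub t).const_mul (η / 2)).add_const (ζ * t)
      refine this.congr_deriv ?_
      simp
  have hμle : ∀ t r, r ≤ t → μ t r ≤ 1 := by
    intro t r h
    simp only [hμdef]
    rw [Real.exp_le_one_iff]
    have := mul_nonneg (hkpos r).le (sub_nonneg.2 h)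
    linarith
  have hμ2 : ∀ t r, k r * (t - r) * μ t r ≤ 1 - μ t r := by
    intro t r
    have h1 := Real.add_one_le_exp (k r * (t - r))
    have h2 : Real.exp (k r * (t - r)) * μ t r = 1 := by
      simp only [hμdef]
      rw [← Real.exp_add]; simp
    have h3 := mul_le_mul_of_nonneg_right h1 (hμpos t r).le
    rw [h2] at h3
    linarith
  change μ t₀ r₀ * (u (x₀, r₀) - v x₀) ≤ _
  by_contra hneg
  push Not at hneg
  -- nonnegativity at the boundary
  have hnn : ∀ a : En n × ℝ → ℝ, (∀ x t, 0 ≤ t → 1 ≤ a (x, t) - v x ∧ a (x, t) - v x ≤ C) →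
      ∀ x t r, T ≤ r → r ≤ t →
      a (x, t) - μ t r * a (x, r) - (1 - μ t r) * v x + (η / 2 * (t - r) + ζ * t) < 0 →
      ζ * t < C := by
    intro a hab x t r h1 h2 hn
    have e1 := hab x r (hT.trans h1)
    have e2 := hab x t (hT.trans (h1.trans h2))
    have e3 : μ t r * (a (x, r) - v x) ≤ 1 * C :=
      mul_le_mul (hμle t r h2) e1.2 (by linarith) zero_le_one
    have e4 : 0 ≤ η / 2 * (t - r) := mul_nonneg (by linarith) (by linarith)
    linarith
  have hbdd : ∀ a : En n × ℝ → ℝ, (∀ x t, 0 ≤ t → 1 ≤ a (x, t) - v x ∧ a (x, t) - v x ≤ C) →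
      (∀ x r t, 0 ≤ r → r ≤ t → a (x, r) - K * (t - r) ≤ a (x, t)) →
      ∀ x t r, (t, r) ∈ klTri T (C / ζ) →
      a (x, t) - μ t r * a (x, r) - (1 - μ t r) * v x + (η / 2 * (t - r) + ζ * t) < 0 →
      klTri T (C / ζ) ∈ 𝓝 (t, r) := by
    rintro a hab ha x t r ⟨a1, a2, a3⟩ hn
    simp only at a1 a2 a3
    have h0 := hnn a hab x t r a1 a2 hn
    have h1 := hab x r (hT.trans a1)
    have h2 := hab x t (hT.trans (a1.trans a2))
    have h3 : 0 ≤ η / 2 * (t - r) := mul_nonneg (by linarith) (by linarith)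
    have h4 : 0 ≤ ζ * t := mul_nonneg hζ.le (hT.trans (a1.trans a2))
    refine klTri_nhds (lt_of_le_of_ne a1 ?_) (lt_of_le_of_ne a2 ?_) (lt_of_le_of_ne a3 ?_)
    · rintro rfl
      by_cases hm : μ t T * C ≤ 1
      · have := mul_le_mul_of_nonneg_left h1.2 (hμpos t T).le
        linarith
      · push Not at hm
        have e1 := hμ2 t T
        rw [hkT] at e1
        have e2 := ha x T t hT a2
        have e3 : (K + 1) * (t - T) * 1 ≤ (K + 1) * (t - T) * (μ t T * C) :=
          mul_le_mul_of_nonneg_left hm.le (mul_nonneg (by linarith) (by linarith))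
        have e4 : (1 - μ t T) * 1 ≤ (1 - μ t T) * (a (x, T) - v x) :=
          mul_le_mul_of_nonneg_left h1.1 (by linarith [hμle t T a2])
        linarith
    · rintro rfl
      have : μ r r = 1 := by simp [hμdef]
      rw [this] at hn
      linarith
    · rintro rfl
      have : ζ * (C / ζ) = C := by field_simp
      linarith
  obtain ⟨a, b, dab, hab, x, t, r, P, Q, R, h1, h2, h3, h4, h5, h6, h7⟩ :=
    kl_sys d hμ hΘ hμpos (klTri_compact T (C / ζ))
      (fun q hq => ⟨hT.trans (hq.1.trans hq.2.1), hT.trans hq.1⟩)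
      (fun q hq => hμle _ _ hq.2.1)
      (fun a x t r => a (x, t) - μ t r * a (x, r) - (1 - μ t r) * v x + (η / 2 * (t - r) + ζ * t))
      (fun a x t r => rfl)
      (by
        have hn : u (x₀, t₀) - μ t₀ r₀ * u (x₀, r₀) - (1 - μ t₀ r₀) * v x₀ +
            (η / 2 * (t₀ - r₀) + ζ * t₀) < 0 := by linarith
        refine ⟨x₀, t₀, r₀, ⟨hr₀, hrt₀, ?_⟩, hn⟩
        simp only
        rw [le_div_iff₀ hζ, mul_comm]
        exact (hnn u d.bu x₀ t₀ r₀ hr₀ hrt₀ hn).le)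
      (hbdd u d.bu hKu) (hbdd w d.bw hKw)
  obtain ⟨a1, a2, a3⟩ := h1
  simp only at a1 a2 a3 h2 h3 h6 h7
  have hm := hμpos t r
  have hm2 := hμ2 t r
  have hk0 := hkpos r
  have hB := dab.bu x r (hT.trans a1)
  have hAt := dab.bu x t (hT.trans (a1.trans a2))
  have hne : r ≠ t := by
    rintro rfl
    have : μ r r = 1 := by simp [hμdef]
    rw [this] at h2
    have : 0 ≤ ζ * r := mul_nonneg hζ.le (hT.trans a1)
    linarith
  have hlt : r < t := lt_of_le_of_ne a2 hne
  have hμlt : μ t r < 1 := by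
    have : 0 < k r * (t - r) * μ t r := mul_pos (mul_pos hk0 (sub_pos.2 hlt)) hm
    linarith
  have hcl : -(η / 4) ≤ b (x, t) - a (x, t) := by
    have := hclose x t (a1.trans a2)
    rcases hab with ⟨rfl, rfl⟩ | ⟨rfl, rfl⟩
    · linarith [this.1]
    · linarith [this.2]
  have hkmB : 0 ≤ k r * μ t r * (a (x, r) - v x) :=
    mul_nonneg (mul_pos hk0 hm).le (by linarith)
  have hHP : η / 4 ≤ H x P := by linarith
  have hQ : Q = (μ t r)⁻¹ • (P - R) + R := by
    rw [h4, show μ t r • Q + (1 - μ t r) • R - R = μ t r • (Q - R) by module, smul_smul,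
      inv_mul_cancel₀ hm.ne', one_smul, sub_add_cancel]
  have hA8 := hA x (P - R) R (by rw [sub_add_cancel]; exact hHP) (h5 hμlt) (μ t r) hm hμlt.le
  rw [sub_add_cancel, ← hQ] at hA8
  have h8 := mul_le_mul_of_nonneg_left h7 hm.le
  rw [mul_add, mul_div_cancel₀ _ hm.ne'] at h8
  have h9 : κ * (k r * (t - r) * μ t r) * (a (x, r) - v x) ≤ κ * (k r * (t - r) * μ t r) * C :=
    mul_le_mul_of_nonneg_left hB.2
      (mul_pos hκ0 (mul_pos (mul_pos hk0 (sub_pos.2 hlt)) hm)).le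
  have h10 : κ * C * (k r * (t - r) * μ t r) ≤ κ * C * (1 - μ t r) :=
    mul_le_mul_of_nonneg_left hm2 (by positivity)
  have h11 : κ * C * (1 - μ t r) ≤ ψ * (1 - μ t r) :=
    mul_le_mul_of_nonneg_right (by linarith) (by linarith)
  linarith

theorem KlD.step3 (d : KlD H v C u w) {η η₀ : ℝ} (hη : 0 < η) (hη₀ : η ≤ η₀)
    (hA : A8plus H η₀) :
    ∃ s : ℝ, 0 < s ∧ ∀ x r t, s ≤ r → r ≤ t → u (x, r) ≤ u (x, t) + η * (t - r) := by
  have hC := d.one_le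
  obtain ⟨ψ, hψ, hA'⟩ := hA (η / 4) (by linarith) (by linarith)
  obtain ⟨T, hT, hclose⟩ := d.step2 (η / 4) (by linarith)
  obtain ⟨K, hK0, hKu, hKw⟩ := d.step1
  have hlim : Tendsto (fun r : ℝ => (K + 1) * C * Real.exp (-(ψ / (2 * C) * (r - T))) * C) atTop
      (𝓝 0) := by
    have h1 : Tendsto (fun r : ℝ => ψ / (2 * C) * (r - T)) atTop atTop :=
      (tendsto_atTop_add_const_right atTop (-T) tendsto_id).const_mul_atTop (by positivity)
    have h2 := ((Real.tendsto_exp_neg_atTop_nhds_zero.comp h1).const_mul ((K + 1) * C)).mul_const C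
    simpa using h2
  obtain ⟨s, hs⟩ := eventually_atTop.1 (hlim.eventually_le_const (half_pos hη))
  refine ⟨max s (T + 1), lt_max_of_lt_right (by linarith), fun x r t hr hrt => ?_⟩
  have hTr : T ≤ r := by linarith [(le_max_right s (T + 1)).trans hr]
  have hkr := hs r ((le_max_left _ _).trans hr)
  set k := (K + 1) * C * Real.exp (-(ψ / (2 * C) * (r - T))) with hk
  have hk0 : 0 < k := by positivity
  have ht0 : 0 ≤ t := by linarith
  have h1 : Real.exp (-(k * (t - r))) * (u (x, r) - v x) ≤ u (x, t) - v x + η / 2 * (t - r) := by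
    refine le_of_forall_pos_le_add fun ε hε => ?_
    have h1 := d.step3a hη hψ hA' hT hclose hK0 hKu hKw (ζ := ε / (t + 1)) (by positivity) x r t
      hTr hrt
    have h2 : ε / (t + 1) * t ≤ ε := by
      rw [div_mul_eq_mul_div, div_le_iff₀ (by linarith)]
      nlinarith
    linarith
  have h2 := Real.add_one_le_exp (-(k * (t - r)))
  have hB := d.bu x r (hT.trans hTr)
  have h3 := mul_le_mul_of_nonneg_right h2 (show 0 ≤ u (x, r) - v x by linarith)
  have h4 : k * (t - r) * (u (x, r) - v x) ≤ k * (t - r) * C :=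
    mul_le_mul_of_nonneg_left hB.2 (mul_nonneg hk0.le (by linarith))
  have h5 : k * C * (t - r) ≤ η / 2 * (t - r) := mul_le_mul_of_nonneg_right hkr (by linarith)
  linarith

theorem kl_H_nonneg (hn : 1 ≤ n) (hc : Continuous fun q : En n × En n => H q.1 q.2)
    (hco : Coercive H) {η₀ : ℝ} (hη₀ : 0 < η₀) (hA : A8minus H η₀) (x P : En n) : 0 ≤ H x P := by
  by_contra hneg
  push Not at hneg
  set η := min η₀ (-H x P) with hη
  have hηpos : 0 < η := lt_min hη₀ (by linarith)
  obtain ⟨ψ, hψ, hA'⟩ := hA η hηpos (min_le_left _ _)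
  obtain ⟨r, hr⟩ := hco 1
  haveI : Nonempty (Fin n) := ⟨⟨0, hn⟩⟩
  haveI : Nontrivial (En n) := inferInstance
  obtain ⟨q, hq⟩ := NormedSpace.exists_lt_norm ℝ (En n) r
  have hHq := hr x q hq.le
  have hPη : H x P ≤ -η := by linarith [min_le_right η₀ (-H x P)]
  have h1 : ∀ m : ℝ, 1 ≤ m → H x (m⁻¹ • (P - q) + q) ≤ 0 := by
    intro m hm
    have h2 := hA' x (P - q) q (by rw [sub_add_cancel]; exact hPη) (by linarith) m hm
    rw [sub_add_cancel] at h2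
    have h3 : 0 ≤ ψ * (m - 1) / m := div_nonneg (mul_nonneg hψ.le (by linarith)) (by linarith)
    by_contra hcon
    push Not at hcon
    have : 0 < m * H x (m⁻¹ • (P - q) + q) := mul_pos (by linarith) hcon
    linarith
  have hl : Tendsto (fun m : ℝ => H x (m⁻¹ • (P - q) + q)) atTop (𝓝 (H x q)) := by
    have h2 : Tendsto (fun m : ℝ => m⁻¹ • (P - q) + q) atTop (𝓝 q) := by
      have := ((tendsto_inv_atTop_zero (𝕜 := ℝ)).smul_const (P - q)).add_const q
      simpa using this
    exact (hc.tendsto (x, q)).comp (tendsto_const_nhds.prodMk_nhds h2)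
  have := le_of_tendsto hl (eventually_atTop.2 ⟨1, h1⟩)
  linarith

theorem KlD.step4 (d : KlD H v C u w) {η : ℝ} (hη : 0 < η) (hH : ∀ x p, 0 ≤ H x p) :
    ∃ s : ℝ, 0 < s ∧ ∀ x r t, s ≤ r → r ≤ t → u (x, t) ≤ u (x, r) + η * (t - r) := by
  have hC := d.one_le
  obtain ⟨T, hT, hclose⟩ := d.step2 (η / 2) (by linarith)
  refine ⟨T + 1, by linarith, ?_⟩
  intro x₀ s t₀ hs hst
  have hs0 : 0 ≤ s := by linarith
  by_contra hneg
  push Not at hneg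
  have hbb : ∀ x t, 0 ≤ t → - C < u (x, s) - u (x, t) := by
    intro x t ht
    have h1 := d.bu x t ht
    have h2 := d.bu x s hs0
    linarith
  have hΘ : KlC1 (fun t r => η * (r - s) + C * (t - 1) ^ 2) (fun t _ => C * (2 * (t - 1)))
      (fun _ _ => η) := by
    refine ⟨by fun_prop, by fun_prop, by fun_prop, fun t r => ?_, fun t r => ?_⟩
    · have := ((((hasDerivAt_id t).sub_const 1).pow 2).const_mul C).const_add (η * (r - s))
      refine this.congr_deriv ?_
      simp
    · simpa using (((hasDerivAt_id r).sub_const s).const_mul η).add_const (C * (t - 1) ^ 2)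
  have hcs : Continuous (fun x => u (x, s)) := by
    rw [← continuousOn_univ]
    exact d.uc.comp (f := fun x : En n => (x, s)) (Continuous.continuousOn (by fun_prop))
      (fun x _ => hs0)
  have hηC : η * (C / η) = C := by field_simp
  obtain ⟨x, t, r, P, h1, h2, h3, h4, h5, h6⟩ := kl_doubling1 d.hc d.hco hΘ
    (S := Icc 0 2 ×ˢ Icc s (s + C / η)) (isCompact_Icc.prod isCompact_Icc)
    (fun q hq => ⟨hq.1.1, hs0.trans hq.2.1⟩) d.vs d.vc d.vp
    (kl_static_sup (fun x => u (x, s)) hH) d.usub (fun x k t => d.up x k s) d.up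
    (by
      have : Continuous fun q : En n × ℝ => (fun x => u (x, s)) q.1 := hcs.comp continuous_fst
      exact this.continuousOn)
    d.uc continuousOn_const (d.wc.sub d.uc)
    (by
      refine ⟨x₀, 1, t₀, ⟨by simp, ⟨hst, ?_⟩⟩, ?_⟩
      · simp only
        by_contra hc
        push Not at hc
        have e1 := hbb x₀ t₀ (hs0.trans hst)
        have e2 := mul_lt_mul_of_pos_left hc hη
        linarith
      · simp only
        linarith)
    (by
      rintro x t r ⟨⟨a1, a2⟩, ⟨a3, a4⟩⟩ hn
      simp only at a1 a2 a3 a4 hn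
      have hq := hbb x r (hs0.trans a3)
      have hsq : 0 ≤ C * (t - 1) ^ 2 := by positivity
      have hkt : 0 ≤ η * (r - s) := mul_nonneg hη.le (by linarith)
      refine kl_box_nhds (lt_of_le_of_ne a1 ?_) (lt_of_le_of_ne a2 ?_) (lt_of_le_of_ne a3 ?_)
        (lt_of_le_of_ne a4 ?_)
      · rintro rfl
        linarith
      · rintro rfl
        linarith
      · rintro rfl
        linarith
      · rintro rfl
        linarith)
  obtain ⟨⟨a1, a2⟩, ⟨a3, a4⟩⟩ := h2
  simp only at a1 a2 a3 a4 h3 h5 h6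
  have e1 := hH x P
  have e2 := hclose x r (by linarith)
  linarith

theorem kl_alphaPlus {η s : ℝ} (hu : ∀ x, 1 ≤ u (x, s) - v x)
    (h : ∀ x t, s ≤ t → u (x, s) ≤ u (x, t) + η * (t - s)) : 1 ≤ alphaPlus u v η s := by
  refine le_csInf ⟨_, 0, s, le_rfl, rfl⟩ ?_
  rintro _ ⟨x, t, ht, rfl⟩
  have h1 := hu x
  rw [le_div_iff₀ (by linarith)]
  linarith [h x t ht]

theorem kl_alphaMinus {η s : ℝ} (hu : ∀ x, 1 ≤ u (x, s) - v x)
    (h : ∀ x t, s ≤ t → u (x, t) ≤ u (x, s) + η * (t - s)) : alphaMinus u v η s ≤ 1 := by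
  refine csSup_le ⟨_, 0, s, le_rfl, rfl⟩ ?_
  rintro _ ⟨x, t, ht, rfl⟩
  have h1 := hu x
  rw [div_le_iff₀ (by linarith)]
  linarith [h x t ht]

end KlSteps2


/-- The Key Lemma (Lemma 5.3): `(α_η⁺, β_η⁺)` is a viscosity supersolution (under (A8)⁺),
and `(α_η⁻, β_η⁻)` is a viscosity subsolution (under (A8)⁻), of the respective ODE systems. -/
theorem stmt15 (n : ℕ) (hn : 1 ≤ n) (H : En n → En n → ℝ)
    (hHcont : Continuous fun q : En n × En n => H q.1 q.2)
    (hHper : ZPeriodicH H) (hHcoer : Coercive H)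
    (v : En n → ℝ) (hvlip : IsLip v) (hvper : ZPeriodic v)
    (hverg : SingleSolution H v 0)
    (u₀₁ u₀₂ : En n → ℝ) (hu₀₁ : IsLip u₀₁) (hu₀₂ : IsLip u₀₂)
    (hu₀₁per : ZPeriodic u₀₁) (hu₀₂per : ZPeriodic u₀₂)
    (u₁ u₂ : En n × ℝ → ℝ) (hu₁per : ZPeriodicST u₁) (hu₂per : ZPeriodicST u₂)
    (hsol : SysSolution H H u₀₁ u₀₂ u₁ u₂)
    (C : ℝ)
    (hnorm : ∀ (x : En n) (t : ℝ), 0 ≤ t →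
      (1 ≤ u₁ (x, t) - v x ∧ u₁ (x, t) - v x ≤ C) ∧
      (1 ≤ u₂ (x, t) - v x ∧ u₂ (x, t) - v x ≤ C))
    (η₀ : ℝ) (hη₀ : 0 < η₀) :
    (A8plus H η₀ →
      ∀ η : ℝ, 0 < η → η ≤ η₀ → ∀ ψ : ℝ, 0 < ψ → A8plusAt H η ψ →
        ∃ sη : ℝ, 0 < sη ∧
          (∀ φ : ℝ → ℝ, ContDiff ℝ 1 φ → ∀ σ : ℝ, sη < σ →
            IsLocalMin (fun s => alphaPlus u₁ v η s - φ s) σ →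
            0 ≤ max (deriv φ σ + ψ / C * (alphaPlus u₁ v η σ - 1)
                  + Fc C (alphaPlus u₁ v η σ - alphaPlus u₂ v η σ))
                (alphaPlus u₁ v η σ - 1)) ∧
          (∀ φ : ℝ → ℝ, ContDiff ℝ 1 φ → ∀ σ : ℝ, sη < σ →
            IsLocalMin (fun s => alphaPlus u₂ v η s - φ s) σ →
            0 ≤ max (deriv φ σ + ψ / C * (alphaPlus u₂ v η σ - 1)
                  + Fc C (alphaPlus u₂ v η σ - alphaPlus u₁ v η σ))
                (alphaPlus u₂ v η σ - 1))) ∧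
    (A8minus H η₀ →
      ∀ η : ℝ, 0 < η → η ≤ η₀ → ∀ ψ : ℝ, 0 < ψ → A8minusAt H η ψ →
        ∃ sη : ℝ, 0 < sη ∧
          (∀ φ : ℝ → ℝ, ContDiff ℝ 1 φ → ∀ σ : ℝ, sη < σ →
            IsLocalMax (fun s => alphaMinus u₁ v η s - φ s) σ →
            min (deriv φ σ + ψ / C * ((alphaMinus u₁ v η σ - 1) / alphaMinus u₁ v η σ)
                  + Fc C (alphaMinus u₁ v η σ - alphaMinus u₂ v η σ))
                (alphaMinus u₁ v η σ - 1) ≤ 0) ∧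
          (∀ φ : ℝ → ℝ, ContDiff ℝ 1 φ → ∀ σ : ℝ, sη < σ →
            IsLocalMax (fun s => alphaMinus u₂ v η s - φ s) σ →
            min (deriv φ σ + ψ / C * ((alphaMinus u₂ v η σ - 1) / alphaMinus u₂ v η σ)
                  + Fc C (alphaMinus u₂ v η σ - alphaMinus u₁ v η σ))
                (alphaMinus u₂ v η σ - 1) ≤ 0)) := by
  obtain ⟨uc, wc, ⟨s1, s2⟩, ⟨p1, p2⟩, i1, i2⟩ := hsol
  have d : KlD H v C u₁ u₂ := by
    refine ⟨hHcont, hHper, hHcoer, hverg.2.1, hverg.1, hvper, hu₁per, hu₂per, uc, wc, ?_, ?_, ?_, ?_,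
      fun x t ht => (hnorm x t ht).1, fun x t ht => (hnorm x t ht).2, ?_, ?_⟩
    · intro φ hφ x t ht hm
      have := s1 φ hφ x t ht hm
      simp only
      linarith
    · intro φ hφ x t ht hm
      have := p1 φ hφ x t ht hm
      simp only
      linarith
    · intro φ hφ x t ht hm
      have := s2 φ hφ x t ht hm
      simp only
      linarith
    · intro φ hφ x t ht hm
      have := p2 φ hφ x t ht hm
      simp only
      linarith
    · rwa [show (fun x => u₁ (x, 0)) = u₀₁ from funext i1]
    · rwa [show (fun x => u₂ (x, 0)) = u₀₂ from funext i2]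
  constructor
  · intro hA η hη hη1 ψ hψ _
    obtain ⟨a, ha, hau⟩ := d.step3 hη hη1 hA
    obtain ⟨b, hb, hbw⟩ := d.symm.step3 hη hη1 hA
    refine ⟨max a b, lt_max_of_lt_left ha, ?_, ?_⟩
    · intro φ hφ σ hσ _
      have h1 : a ≤ σ := (le_max_left _ _).trans hσ.le
      have := kl_alphaPlus (u := u₁) (v := v) (η := η) (s := σ)
        (fun x => (d.bu x σ (ha.le.trans h1)).1) (fun x t ht => hau x σ t h1 ht)
      exact le_max_of_le_right (by linarith)
    · intro φ hφ σ hσ _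
      have h1 : b ≤ σ := (le_max_right _ _).trans hσ.le
      have := kl_alphaPlus (u := u₂) (v := v) (η := η) (s := σ)
        (fun x => (d.bw x σ (hb.le.trans h1)).1) (fun x t ht => hbw x σ t h1 ht)
      exact le_max_of_le_right (by linarith)
  · intro hA η hη hη1 ψ hψ _
    have hH := kl_H_nonneg hn hHcont hHcoer hη₀ hA
    obtain ⟨a, ha, hau⟩ := d.step4 hη hH
    obtain ⟨b, hb, hbw⟩ := d.symm.step4 hη hH
    refine ⟨max a b, lt_max_of_lt_left ha, ?_, ?_⟩
    · intro φ hφ σ hσ _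
      have h1 : a ≤ σ := (le_max_left _ _).trans hσ.le
      have := kl_alphaMinus (u := u₁) (v := v) (η := η) (s := σ)
        (fun x => (d.bu x σ (ha.le.trans h1)).1) (fun x t ht => hau x σ t h1 ht)
      exact min_le_of_right_le (by linarith)
    · intro φ hφ σ hσ _
      have h1 : b ≤ σ := (le_max_right _ _).trans hσ.le
      have := kl_alphaMinus (u := u₂) (v := v) (η := η) (s := σ)
        (fun x => (d.bw x σ (hb.le.trans h1)).1) (fun x t ht => hbw x σ t h1 ht)
      exact min_le_of_right_le (by linarith)
end
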